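/- arXiv:gr-qc/0201091 — 2 statements merged into one kernel-verified Lean document; each statement's English description precedes it below -/
import Mathlib

section
/- The map Φ restricted to D is a bijection from D onto I; that is, Φ maps D into I, is injective on D, and every point of I is the image under Φ of some point of D. (Bijectivity part of Theorem 4.3, inversion of the fluid variables.) -/
/-!
A pair `(μ, j)` is the image under `Φ` of a state `(ρ, v)` with `|v| < 1` exactly when `ρ ≤ μ`,
`(μ + p ρ) * (μ - ρ) = j ^ 2` and `v = j / (μ + p ρ)`. So the velocity is determined by `ρ`, and
inverting `Φ` amounts to solving one scalar equation for `ρ` in `[ρ₀, μ]`. Since `p` grows at most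
as fast as the identity and `ρ + p ρ > 0`, its left-hand side decreases strictly there, down to `0`
at `ρ = μ`. Hence there is a unique solution if `j ^ 2 ≤ (μ + p ρ₀) * (μ - ρ₀)` and none otherwise;
solving this quadratic inequality for `μ` gives the lower bound on the energy density.
-/

section FluidMap

open Set

/-- The map `Φ` from fluid variables (rest energy density `ρ`, speed `v`) to conserved variables
(energy density `μ`, momentum density `j`), for the equation of state `p`. -/
noncomputable def fluidMap (p : ℝ → ℝ) (x : ℝ × ℝ) : ℝ × ℝ :=
  ((x.1 + p x.1 * x.2 ^ 2) / (1 - x.2 ^ 2), ((x.1 + p x.1) * x.2) / (1 - x.2 ^ 2))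

/-- The squared momentum density of a fluid of energy density `μ` and rest energy density `ρ`. -/
def momentumSq (p : ℝ → ℝ) (μ ρ : ℝ) : ℝ :=
  (μ + p ρ) * (μ - ρ)

/-- The least energy density of a fluid of momentum density `j` whose rest energy density is at
least `ρ₀`, where `p₀` is the pressure at `ρ₀`. For `p₀ = 0` this is the function `μ₀`. -/
noncomputable def minEnergy (ρ₀ p₀ j : ℝ) : ℝ :=
  (ρ₀ - p₀) / 2 + √((ρ₀ + p₀) ^ 2 / 4 + j ^ 2)

variable {p : ℝ → ℝ} {ρ₀ p₀ ρ v μ j : ℝ}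

theorem minEnergy_le_iff (h : 0 ≤ ρ₀ + p₀) :
    minEnergy ρ₀ p₀ j ≤ μ ↔ ρ₀ ≤ μ ∧ j ^ 2 ≤ (μ + p₀) * (μ - ρ₀) := by
  have complete_square :
      (μ - (ρ₀ - p₀) / 2) ^ 2 = (μ + p₀) * (μ - ρ₀) + (ρ₀ + p₀) ^ 2 / 4 := by ring
  rw [minEnergy, ← le_sub_iff_add_le', Real.sqrt_le_iff, complete_square]
  constructor
  · rintro ⟨hμ, hj⟩
    have : (ρ₀ + p₀) / 2 ≤ μ - (ρ₀ - p₀) / 2 :=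
      le_of_sq_le_sq (by linarith [sq_nonneg j]) hμ
    constructor <;> linarith
  · rintro ⟨hμ, hj⟩
    constructor <;> linarith

theorem fluidMap_eq_iff (hv : |v| < 1) :
    fluidMap p (ρ, v) = (μ, j) ↔ j = (μ + p ρ) * v ∧ μ - ρ = j * v := by
  have hv' : 1 - v ^ 2 ≠ 0 := (sub_pos.2 ((sq_lt_one_iff_abs_lt_one v).2 hv)).ne'
  rw [fluidMap, Prod.mk.injEq, div_eq_iff hv', div_eq_iff hv']
  constructor
  · rintro ⟨hμ, hj⟩
    constructor
    · apply mul_right_cancel₀ hv'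
      linear_combination v * hμ - hj
    · apply mul_right_cancel₀ hv'
      linear_combination v * hj - hμ
  · rintro ⟨hj, hμ⟩
    constructor
    · linear_combination -hμ - v * hj
    · linear_combination -v * hμ - hj

theorem abs_lt_one_and_fluidMap_eq_iff (hρ : 0 < ρ + p ρ) :
    |v| < 1 ∧ fluidMap p (ρ, v) = (μ, j) ↔
      ρ ≤ μ ∧ momentumSq p μ ρ = j ^ 2 ∧ v = j / (μ + p ρ) := by
  constructor
  · rintro ⟨hv, h⟩
    obtain ⟨hj, hμ⟩ := (fluidMap_eq_iff hv).1 h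
    have hv' : v ^ 2 < 1 := (sq_lt_one_iff_abs_lt_one v).2 hv
    have enthalpy : (μ + p ρ) * (1 - v ^ 2) = ρ + p ρ := by linear_combination hμ + v * hj
    have hpos : 0 < μ + p ρ :=
      pos_of_mul_pos_left (enthalpy ▸ hρ) (sub_nonneg.2 hv'.le)
    have hρμ : 0 ≤ μ - ρ := by
      rw [hμ, hj, mul_assoc]
      exact mul_nonneg hpos.le (mul_self_nonneg v)
    refine ⟨sub_nonneg.1 hρμ, ?_, (eq_div_iff hpos.ne').2 (by linarith)⟩
    calc (μ + p ρ) * (μ - ρ) = j * ((μ + p ρ) * v) := by rw [hμ]; ring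
      _ = j ^ 2 := by rw [← hj, sq]
  · rintro ⟨hρμ, hsq, rfl⟩
    have hpos : 0 < μ + p ρ := by linarith
    rw [momentumSq] at hsq
    have hv : |j / (μ + p ρ)| < 1 := by
      rw [← sq_lt_one_iff_abs_lt_one, div_pow, div_lt_one (by positivity), ← hsq, sq]
      exact mul_lt_mul_of_pos_left (by linarith) hpos
    refine ⟨hv, (fluidMap_eq_iff hv).2 ⟨(mul_div_cancel₀ j hpos.ne').symm, ?_⟩⟩
    rw [← mul_div_assoc, eq_div_iff hpos.ne']
    linarith

theorem fluidMap_snd_nonneg_iff (hρ : 0 < ρ + p ρ) (hv : |v| < 1) :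
    0 ≤ (fluidMap p (ρ, v)).2 ↔ 0 ≤ v := by
  have hv' : 0 < 1 - v ^ 2 := sub_pos.2 ((sq_lt_one_iff_abs_lt_one v).2 hv)
  rw [fluidMap, le_div_iff₀ hv', zero_mul, mul_nonneg_iff_of_pos_left hρ]

theorem strictAntiOn_momentumSq (hp : AntitoneOn (fun ρ ↦ p ρ - ρ) (Ici ρ₀))
    (hpos : ∀ ρ, ρ₀ ≤ ρ → 0 < ρ + p ρ) : StrictAntiOn (momentumSq p μ) (Icc ρ₀ μ) := by
  rintro a ⟨ha, -⟩ b ⟨hb, hbμ⟩ hab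
  have growth : p b ≤ p a + (b - a) := by linarith [hp ha hb hab.le]
  have gain : 0 < (b - a) * (p a + b) := mul_pos (by linarith) (by linarith [hpos a ha])
  calc (μ + p b) * (μ - b) ≤ (μ + (p a + (b - a))) * (μ - b) := by gcongr
    _ < (μ + (p a + (b - a))) * (μ - b) + (b - a) * (p a + b) := lt_add_of_pos_right _ gain
    _ = (μ + p a) * (μ - a) := by ring

theorem bijOn_momentumSq (hcont : ContinuousOn p (Ici ρ₀))
    (hp : AntitoneOn (fun ρ ↦ p ρ - ρ) (Ici ρ₀)) (hpos : ∀ ρ, ρ₀ ≤ ρ → 0 < ρ + p ρ)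
    (hμ : ρ₀ ≤ μ) :
    BijOn (momentumSq p μ) (Icc ρ₀ μ) (Icc 0 (momentumSq p μ ρ₀)) := by
  have hanti : StrictAntiOn (momentumSq p μ) (Icc ρ₀ μ) := strictAntiOn_momentumSq hp hpos
  have hcont' : ContinuousOn (momentumSq p μ) (Icc ρ₀ μ) :=
    (continuousOn_const.add (hcont.mono Icc_subset_Ici_self)).mul
      (continuousOn_const.sub continuousOn_id)
  have himage := hcont'.image_Icc_of_antitoneOn hμ hanti.antitoneOn
  rw [show momentumSq p μ μ = 0 by rw [momentumSq, sub_self, mul_zero]] at himage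
  exact himage ▸ hanti.injOn.bijOn_image

theorem bijOn_fluidMap (hcont : ContinuousOn p (Ici ρ₀))
    (hp : AntitoneOn (fun ρ ↦ p ρ - ρ) (Ici ρ₀)) (hpos : ∀ ρ, ρ₀ ≤ ρ → 0 < ρ + p ρ) :
    BijOn (fluidMap p) {x | ρ₀ ≤ x.1 ∧ |x.2| < 1} {y | minEnergy ρ₀ (p ρ₀) y.2 ≤ y.1} := by
  have hbij {μ : ℝ} (hμ : ρ₀ ≤ μ) := bijOn_momentumSq hcont hp hpos hμ
  have hminEnergy {μ j : ℝ} := minEnergy_le_iff (μ := μ) (j := j) (hpos ρ₀ le_rfl).le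
  refine ⟨?_, ?_, ?_⟩
  · rintro ⟨ρ, v⟩ ⟨hρ, hv⟩
    obtain ⟨hρμ, hsq, -⟩ := (abs_lt_one_and_fluidMap_eq_iff (hpos ρ hρ)).1 ⟨hv, rfl⟩
    have hμ := hρ.trans hρμ
    exact hminEnergy.2 ⟨hμ, hsq ▸ ((hbij hμ).mapsTo ⟨hρ, hρμ⟩).2⟩
  · rintro ⟨ρ, v⟩ ⟨hρ, hv⟩ ⟨σ, w⟩ ⟨hσ, hw⟩ heq
    obtain ⟨⟨μ, j⟩, hy⟩ : ∃ y, fluidMap p (σ, w) = y := ⟨_, rfl⟩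
    obtain ⟨hρμ, hρsq, rfl⟩ := (abs_lt_one_and_fluidMap_eq_iff (hpos ρ hρ)).1 ⟨hv, heq.trans hy⟩
    obtain ⟨hσμ, hσsq, rfl⟩ := (abs_lt_one_and_fluidMap_eq_iff (hpos σ hσ)).1 ⟨hw, hy⟩
    obtain rfl : ρ = σ :=
      (hbij (hρ.trans hρμ)).injOn ⟨hρ, hρμ⟩ ⟨hσ, hσμ⟩ (hρsq.trans hσsq.symm)
    rfl
  · rintro ⟨μ, j⟩ hmin
    obtain ⟨hμ, hj⟩ := hminEnergy.1 hmin
    obtain ⟨ρ, ⟨hρ, hρμ⟩, hsq⟩ := (hbij hμ).surjOn ⟨sq_nonneg j, hj⟩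
    obtain ⟨hv, heq⟩ := (abs_lt_one_and_fluidMap_eq_iff (hpos ρ hρ)).2 ⟨hρμ, hsq, rfl⟩
    exact ⟨(ρ, j / (μ + p ρ)), ⟨hρ, hv⟩, heq⟩

theorem antitoneOn_sub_id_of_deriv_le_one (hp : Differentiable ℝ p)
    (hp' : ∀ ρ, ρ₀ ≤ ρ → deriv p ρ ≤ 1) : AntitoneOn (fun ρ ↦ p ρ - ρ) (Ici ρ₀) := by
  have hdiff : Differentiable ℝ fun ρ ↦ p ρ - ρ := hp.sub differentiable_id
  refine antitoneOn_of_deriv_nonpos (convex_Ici ρ₀) hdiff.continuous.continuousOn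
    hdiff.differentiableOn fun ρ hρ ↦ ?_
  rw [deriv_fun_sub (hp ρ) differentiableAt_fun_id, deriv_id'']
  exact sub_nonpos.2 (hp' ρ (interior_subset hρ))

theorem stmt0_general (hcont : ContinuousOn p (Ici ρ₀))
    (hp : AntitoneOn (fun ρ ↦ p ρ - ρ) (Ici ρ₀)) (hpos : ∀ ρ, ρ₀ ≤ ρ → 0 < ρ + p ρ) :
    BijOn (fluidMap p) {x | ρ₀ ≤ x.1 ∧ 0 ≤ x.2 ∧ x.2 < 1}
      {y | 0 ≤ y.2 ∧ minEnergy ρ₀ (p ρ₀) y.2 ≤ y.1} := by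
  have hbij := bijOn_fluidMap hcont hp hpos
  have hsub : {y : ℝ × ℝ | 0 ≤ y.2 ∧ minEnergy ρ₀ (p ρ₀) y.2 ≤ y.1} ⊆
      {y | minEnergy ρ₀ (p ρ₀) y.2 ≤ y.1} := fun _ hy ↦ hy.2
  convert hbij.subset_right hsub using 1
  ext ⟨ρ, v⟩
  constructor
  · rintro ⟨hρ, hv, hv1⟩
    have habs : |v| < 1 := (abs_of_nonneg hv).trans_lt hv1
    exact ⟨⟨hρ, habs⟩, (fluidMap_snd_nonneg_iff (hpos ρ hρ) habs).2 hv, hbij.mapsTo ⟨hρ, habs⟩⟩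
  · rintro ⟨⟨hρ, hv⟩, hj, -⟩
    exact ⟨hρ, (fluidMap_snd_nonneg_iff (hpos ρ hρ) hv).1 hj, (abs_lt.1 hv).2⟩

end FluidMap

/-- Bijectivity part of Theorem 4.3: the fluid-variable map Φ is a bijection
from D onto I. -/
theorem stmt0 (ρ₀ : ℝ) (hρ₀ : 0 < ρ₀) (p : ℝ → ℝ) (hp : ContDiff ℝ 1 p)
    (hp0 : p ρ₀ = 0) (hpnn : ∀ ρ : ℝ, ρ₀ ≤ ρ → 0 ≤ p ρ)
    (hp' : ∀ ρ : ℝ, ρ₀ ≤ ρ → 0 < deriv p ρ ∧ deriv p ρ < 1)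
    (D : Set (ℝ × ℝ)) (hD : D = {x : ℝ × ℝ | ρ₀ ≤ x.1 ∧ 0 ≤ x.2 ∧ x.2 < 1})
    (I : Set (ℝ × ℝ))
    (hI : I = {y : ℝ × ℝ | 0 ≤ y.2 ∧ ρ₀ / 2 + Real.sqrt (ρ₀ ^ 2 / 4 + y.2 ^ 2) ≤ y.1})
    (Φ : ℝ × ℝ → ℝ × ℝ)
    (hΦ : ∀ x : ℝ × ℝ, Φ x = ((x.1 + p x.1 * x.2 ^ 2) / (1 - x.2 ^ 2),
      ((x.1 + p x.1) * x.2) / (1 - x.2 ^ 2))) :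
    Set.BijOn Φ D I := by
  obtain rfl : Φ = fluidMap p := funext hΦ
  simpa only [hD, hI, minEnergy, hp0, sub_zero, add_zero] using
    stmt0_general hp.continuous.continuousOn
      (antitoneOn_sub_id_of_deriv_le_one (hp.differentiable one_ne_zero) fun ρ hρ ↦ (hp' ρ hρ).2.le)
      fun ρ hρ ↦ by linarith [hpnn ρ hρ]
end

section
/- Let k be an integer and ℓ ≥ 0 an integer. For l = 0, …, ℓ let p̊_l : ℝ³∖{0} → ℝ³ be smooth vector fields which are positively homogeneous of degree 0 (p̊_l(t x) = p̊_l(x) for all t > 0 and x ≠ 0). Then there exist smooth vector fields V̊_l : ℝ³∖{0} → ℝ³, l = 0, …, ℓ+2, positively homogeneous of degree 0, such that the vector field V(x) := ‖x‖^k Σ_{l=0}^{ℓ+2} (log ‖x‖)^l V̊_l(x) satisfies, componentwise on ℝ³∖{0}, Δ V^a + (1/3) ∂^a (∂_b V^b) = ‖x‖^{k−2} Σ_{l=0}^{ℓ} (log ‖x‖)^l p̊_l^a(x). (Smooth-data version of Lemma 3.6, Meyers' potential for the flat conformal Killing–divergence operator L_δ.) -/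
/-- The partial derivative in the i-th coordinate direction of a scalar
function on Euclidean ℝ³. -/
noncomputable def pd (i : Fin 3) (f : EuclideanSpace ℝ (Fin 3) → ℝ) :
    EuclideanSpace ℝ (Fin 3) → ℝ :=
  fun x => fderiv ℝ f x (EuclideanSpace.single i 1)

/-- The flat conformal Killing–divergence operator
(L_δ V)^a = Δ V^a + (1/3) ∂^a (div V) acting on vector fields on ℝ³,
componentwise. -/
noncomputable def Ldelta
    (V : EuclideanSpace ℝ (Fin 3) → EuclideanSpace ℝ (Fin 3)) (a : Fin 3) :
    EuclideanSpace ℝ (Fin 3) → ℝ :=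
  fun x => (∑ i : Fin 3, pd i (pd i (fun y => V y a)) x) +
    (1 / 3) * pd a (fun y => ∑ b : Fin 3, pd b (fun z => V z b) y) x

/-!
If `Δ W = F` and `Δ φ = - div W / 4`, then `V = W + ∇ φ` satisfies `Δ V = F - ∇ div W / 4` and
`div V = 3 div W / 4`, hence `L_δ V = F`. So everything reduces to the scalar equation `Δ u = f` for
polynomials in `log ‖x‖` with coefficients homogeneous of degree `k - 2`. For `f` itself homogeneous
it is solvable up to a resonance `‖x‖⁻² h` with `h` harmonic of degree `k`, and the Laplacian of
`log ‖x‖ ^ (n + 1) h` is `(n + 1) (2 k + 1) log ‖x‖ ^ n ‖x‖⁻² h` up to lower powers of the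
logarithm, so that resonances are absorbed by one more power of `log ‖x‖`.

Solvability modulo resonances passes from degree `k ≥ 0` to `k + 1` by applying
`w ↦ x · w - ‖x‖² div w / (2 k + 1)`, which commutes with `Δ`, to a solution of `Δ w = ∇ f` modulo
resonances, and from `k` to `- 1 - k` by the Kelvin transform. This leaves `k = 0`, that is
`Δ u = p + const` on the unit sphere. Let `U` solve the Dirichlet problem `Δ U = ψ(‖x‖) p` on the
unit ball with a bump function `ψ`; it is a multiple of the Newton potential of the source minus its
Kelvin transform. Averaging `U - U 0` along radii with the weight `(1 - t) / t`, for which the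
radial part of the Laplacian integrates to boundary terms, gives `u` up to a constant factor.
-/

open Filter MeasureTheory Set Function
open scoped Topology ContDiff Convolution

local notation "ℝ³" => EuclideanSpace ℝ (Fin 3)

/-- The Laplacian on `ℝ³`, written with the partial derivatives that `Ldelta` uses. -/
noncomputable def lap (f : ℝ³ → ℝ) : ℝ³ → ℝ := fun x => ∑ i, pd i (pd i f) x

section PartialDerivatives

variable {f g : ℝ³ → ℝ} {x : ℝ³} {m n : WithTop ℕ∞}

theorem pd_congr (h : f =ᶠ[𝓝 x] g) (i : Fin 3) : pd i f =ᶠ[𝓝 x] pd i g :=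
  (h.fderiv (𝕜 := ℝ)).mono fun y hy => by simp only [pd, hy]

theorem lap_congr (h : f =ᶠ[𝓝 x] g) : lap f =ᶠ[𝓝 x] lap g :=
  (eventually_all.2 fun i => pd_congr (pd_congr h i) i).mono fun _ hy =>
    Finset.sum_congr rfl fun i _ => hy i

theorem contDiffAt_pd (hf : ContDiffAt ℝ n f x) (hmn : m + 1 ≤ n) (i : Fin 3) :
    ContDiffAt ℝ m (pd i f) x :=
  (hf.fderiv_right hmn).clm_apply contDiffAt_const

theorem contDiff_pd (hf : ContDiff ℝ n f) (hmn : m + 1 ≤ n) (i : Fin 3) :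
    ContDiff ℝ m (pd i f) :=
  contDiff_iff_contDiffAt.2 fun _ => contDiffAt_pd hf.contDiffAt hmn i

theorem contDiffAt_lap (hf : ContDiffAt ℝ n f x) (hmn : m + 2 ≤ n) :
    ContDiffAt ℝ m (lap f) x := by
  have hmn' : m + 1 + 1 ≤ n := by rwa [add_assoc, one_add_one_eq_two]
  exact ContDiffAt.sum fun i _ => contDiffAt_pd (contDiffAt_pd hf hmn' i) le_rfl i

theorem differentiableAt_pd (hf : ContDiffAt ℝ 2 f x) (i : Fin 3) :
    DifferentiableAt ℝ (pd i f) x :=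
  (contDiffAt_pd (m := 1) hf (by norm_num) i).differentiableAt one_ne_zero

theorem eventually_differentiableAt (hf : ContDiffAt ℝ 2 f x) :
    ∀ᶠ y in 𝓝 x, DifferentiableAt ℝ f y :=
  (hf.eventually (by simp)).mono fun _ hy => hy.differentiableAt two_ne_zero

theorem pd_const (c : ℝ) (i : Fin 3) : pd i (fun _ => c) = fun _ => 0 := by
  ext
  simp [pd]

theorem pd_add (hf : DifferentiableAt ℝ f x) (hg : DifferentiableAt ℝ g x) (i : Fin 3) :
    pd i (fun y => f y + g y) x = pd i f x + pd i g x := by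
  simp [pd, fderiv_fun_add hf hg]

theorem pd_mul (hf : DifferentiableAt ℝ f x) (hg : DifferentiableAt ℝ g x) (i : Fin 3) :
    pd i (fun y => f y * g y) x = f x * pd i g x + g x * pd i f x := by
  simp [pd, fderiv_fun_mul hf hg]

theorem pd_const_mul (c : ℝ) (hf : DifferentiableAt ℝ f x) (i : Fin 3) :
    pd i (fun y => c * f y) x = c * pd i f x := by
  simp [pd, fderiv_const_mul hf]

theorem pd_sum {ι : Type*} (s : Finset ι) {F : ι → ℝ³ → ℝ}
    (hF : ∀ j ∈ s, DifferentiableAt ℝ (F j) x) (i : Fin 3) :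
    pd i (fun y => ∑ j ∈ s, F j y) x = ∑ j ∈ s, pd i (F j) x := by
  simp [pd, fderiv_fun_sum hF]

theorem pd_scomp {φ : ℝ → ℝ} {φ' : ℝ} (hφ : HasDerivAt φ φ' (f x))
    (hf : DifferentiableAt ℝ f x) (i : Fin 3) :
    pd i (fun y => φ (f y)) x = φ' * pd i f x := by
  simp [pd, (hφ.comp_hasFDerivAt x hf.hasFDerivAt).fderiv, ← Function.comp_def φ f]

theorem pd_comp_smul (t : ℝ) (i : Fin 3) :
    pd i (fun y => f (t • y)) x = t * pd i f (t • x) := by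
  simp [pd, fderiv_comp_smul]

theorem pd_coord (i j : Fin 3) : pd i (fun y => y j) = fun _ => if i = j then 1 else 0 := by
  ext x
  have h := (EuclideanSpace.proj (𝕜 := ℝ) j : ℝ³ →L[ℝ] ℝ).hasFDerivAt (x := x)
  simp only [EuclideanSpace.coe_proj] at h
  simp [pd, h.fderiv, eq_comm]

theorem pd_norm_sq (i : Fin 3) : pd i (fun y => ‖y‖ ^ 2) x = 2 * x i := by
  simp [pd, (hasStrictFDerivAt_norm_sq x).hasFDerivAt.fderiv,
    EuclideanSpace.inner_single_right]

theorem pd_norm (hx : x ≠ 0) (i : Fin 3) : pd i (fun y => ‖y‖) x = x i / ‖x‖ := by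
  have hx' : ‖x‖ ≠ 0 := norm_ne_zero_iff.2 hx
  have h := pd_mul (differentiableAt_id.norm ℝ hx) (differentiableAt_id.norm ℝ hx) i
  simp only [id_eq, ← pow_two, pd_norm_sq] at h
  field_simp
  linarith

theorem pd_norm_zpow (hx : x ≠ 0) (m : ℤ) (i : Fin 3) :
    pd i (fun y => ‖y‖ ^ m) x = m * ‖x‖ ^ (m - 2) * x i := by
  have hx' : ‖x‖ ≠ 0 := norm_ne_zero_iff.2 hx
  rw [pd_scomp (hasDerivAt_zpow m ‖x‖ (Or.inl hx')) (differentiableAt_id.norm ℝ hx), pd_norm hx,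
    show m - 1 = m - 2 + 1 by ring, zpow_add_one₀ hx']
  field_simp

theorem sum_mul_pd (v : ℝ³) : ∑ i, v i * pd i f x = fderiv ℝ f x v := by
  conv_rhs => rw [← (EuclideanSpace.basisFun (Fin 3) ℝ).sum_repr v]
  simp [pd]

theorem hasDerivAt_comp_smul {t : ℝ} (hf : DifferentiableAt ℝ f (t • x)) :
    HasDerivAt (fun s : ℝ => f (s • x)) (∑ i, x i * pd i f (t • x)) t := by
  have h := hf.hasFDerivAt.comp_hasDerivAt t ((hasDerivAt_id t).smul_const x)
  simpa [sum_mul_pd, Function.comp_def] using h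

theorem sum_coord_sq : ∑ i, x i * x i = ‖x‖ ^ 2 := by
  simp [EuclideanSpace.norm_sq_eq, ← pow_two]

theorem pd_comm (hf : ContDiffAt ℝ 2 f x) (i j : Fin 3) :
    pd i (pd j f) x = pd j (pd i f) x := by
  have hd : DifferentiableAt ℝ (fderiv ℝ f) x :=
    (hf.fderiv_right (m := 1) (by norm_num)).differentiableAt one_ne_zero
  have h : ∀ a b : Fin 3, pd a (pd b f) x =
      fderiv ℝ (fderiv ℝ f) x (EuclideanSpace.single a 1) (EuclideanSpace.single b 1) := by
    intro a b
    change fderiv ℝ (fun y => fderiv ℝ f y (EuclideanSpace.single b 1)) x _ = _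
    simp [fderiv_clm_apply hd (differentiableAt_const _)]
  rw [h, h]
  exact hf.isSymmSndFDerivAt (by simp) _ _

theorem lap_add (hf : ContDiffAt ℝ 2 f x) (hg : ContDiffAt ℝ 2 g x) :
    lap (fun y => f y + g y) x = lap f x + lap g x := by
  simp only [lap, ← Finset.sum_add_distrib]
  refine Finset.sum_congr rfl fun i _ => ?_
  rw [← pd_add (differentiableAt_pd hf i) (differentiableAt_pd hg i)]
  refine (pd_congr ?_ i).self_of_nhds
  filter_upwards [eventually_differentiableAt hf, eventually_differentiableAt hg] with y hfy hgy
  exact pd_add hfy hgy i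

theorem lap_mul (hf : ContDiffAt ℝ 2 f x) (hg : ContDiffAt ℝ 2 g x) :
    lap (fun y => f y * g y) x =
      f x * lap g x + g x * lap f x + 2 * ∑ i, pd i f x * pd i g x := by
  have hf' := hf.differentiableAt two_ne_zero
  have hg' := hg.differentiableAt two_ne_zero
  simp only [lap, Finset.mul_sum, ← Finset.sum_add_distrib]
  refine Finset.sum_congr rfl fun i _ => ?_
  have h : pd i (fun y => f y * g y) =ᶠ[𝓝 x] fun y => f y * pd i g y + g y * pd i f y := by
    filter_upwards [eventually_differentiableAt hf, eventually_differentiableAt hg] with y hfy hgy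
    exact pd_mul hfy hgy i
  rw [(pd_congr h i).self_of_nhds,
    pd_add (hf'.fun_mul (differentiableAt_pd hg i)) (hg'.fun_mul (differentiableAt_pd hf i)),
    pd_mul hf' (differentiableAt_pd hg i), pd_mul hg' (differentiableAt_pd hf i)]
  ring

theorem lap_const (c : ℝ) : lap (fun _ => c) x = 0 := by
  simp only [lap, pd_const, Finset.sum_const_zero]

theorem lap_const_mul (c : ℝ) (hf : ContDiffAt ℝ 2 f x) :
    lap (fun y => c * f y) x = c * lap f x := by
  simp [lap_mul contDiffAt_const hf, lap_const, pd_const]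

theorem lap_sum {ι : Type*} (s : Finset ι) {F : ι → ℝ³ → ℝ}
    (hF : ∀ j ∈ s, ContDiffAt ℝ 2 (F j) x) :
    lap (fun y => ∑ j ∈ s, F j y) x = ∑ j ∈ s, lap (F j) x := by
  classical
  induction s using Finset.induction_on with
  | empty => simp [lap_const]
  | insert a s ha ih =>
    simp only [Finset.sum_insert ha]
    rw [lap_add (hF a (by simp)) (ContDiffAt.sum fun j hj => hF j (by simp [hj])),
      ih fun j hj => hF j (by simp [hj])]

theorem lap_coord_mul (hf : ContDiffAt ℝ 2 f x) (i : Fin 3) :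
    lap (fun y => y i * f y) x = x i * lap f x + 2 * pd i f x := by
  have hcoord : lap (fun y => y i) x = 0 := by
    simp only [lap, pd_coord, pd_const, Finset.sum_const_zero]
  rw [lap_mul (by fun_prop) hf, hcoord]
  simp [pd_coord]

theorem lap_pd (hf : ContDiffAt ℝ 3 f x) (a : Fin 3) : lap (pd a f) x = pd a (lap f) x := by
  have hf' : ∀ i, ContDiffAt ℝ 2 (pd i f) x := contDiffAt_pd hf (by norm_num)
  unfold lap
  rw [pd_sum _ fun i _ => differentiableAt_pd (hf' i) i]
  refine Finset.sum_congr rfl fun i _ => ?_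
  rw [pd_comm (hf' i) a i]
  refine (pd_congr ?_ i).self_of_nhds
  filter_upwards [hf.eventually (by simp)] with y hy
  exact pd_comm (hy.of_le (by norm_num)) i a

end PartialDerivatives

/-- Smooth functions on `ℝ³ ∖ {0}` that are positively homogeneous of degree `k`; the value at the
origin is unconstrained. -/
structure IsSmoothHom (k : ℤ) (f : ℝ³ → ℝ) : Prop where
  contDiffOn : ContDiffOn ℝ ∞ f {x | x ≠ 0}
  map_smul : ∀ t : ℝ, 0 < t → ∀ x, x ≠ 0 → f (t • x) = t ^ k * f x

theorem eventually_nhds_of_ne_zero {p : ℝ³ → Prop} (h : ∀ x, x ≠ 0 → p x) {x : ℝ³} (hx : x ≠ 0) :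
    ∀ᶠ y in 𝓝 x, p y :=
  (isOpen_ne.eventually_mem hx).mono h

theorem contDiffAt_norm_zpow {x : ℝ³} (hx : x ≠ 0) (m : ℤ) {n : WithTop ℕ∞} :
    ContDiffAt ℝ n (fun y : ℝ³ => ‖y‖ ^ m) x := by
  cases m with
  | ofNat m => simpa using (contDiffAt_norm ℝ hx).pow m
  | negSucc m =>
    simp only [zpow_negSucc]
    exact ((contDiffAt_norm ℝ hx).pow (m + 1)).inv (pow_ne_zero _ (norm_ne_zero_iff.2 hx))

theorem lap_norm_zpow {x : ℝ³} (hx : x ≠ 0) (m : ℤ) :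
    lap (fun y => ‖y‖ ^ m) x = m * (m + 1) * ‖x‖ ^ (m - 2) := by
  have hx' : ‖x‖ ≠ 0 := norm_ne_zero_iff.2 hx
  have h : ∀ i, pd i (pd i fun y => ‖y‖ ^ m) x =
      m * (‖x‖ ^ (m - 2) + (m - 2) * ‖x‖ ^ (m - 2 - 2) * (x i * x i)) := by
    intro i
    have hd := (contDiffAt_norm_zpow (n := 1) hx (m - 2)).differentiableAt one_ne_zero
    rw [(pd_congr (eventually_nhds_of_ne_zero (fun y hy => pd_norm_zpow hy m i) hx)
      i).self_of_nhds, pd_mul (hd.const_mul _) (by fun_prop), pd_const_mul _ hd, pd_norm_zpow hx,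
      pd_coord]
    simp only [↓reduceIte, mul_one, Int.cast_sub, Int.cast_ofNat]
    ring
  simp only [lap, h, ← Finset.mul_sum, Finset.sum_add_distrib, sum_coord_sq]
  rw [show m - 2 = m - 2 - 2 + (2 : ℕ) by ring, zpow_add₀ hx', zpow_natCast]
  simp only [Finset.sum_const, Finset.card_univ, Fintype.card_fin, nsmul_eq_mul, Nat.cast_ofNat,
    sub_add_cancel]
  ring

namespace IsSmoothHom

variable {k l : ℤ} {f g : ℝ³ → ℝ} {x : ℝ³}

theorem contDiffAt (hf : IsSmoothHom k f) (hx : x ≠ 0) {n : ℕ∞} : ContDiffAt ℝ n f x :=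
  (hf.contDiffOn.contDiffAt (isOpen_ne.mem_nhds hx)).of_le (mod_cast le_top)

theorem contDiffAt_two (hf : IsSmoothHom k f) (hx : x ≠ 0) : ContDiffAt ℝ 2 f x :=
  hf.contDiffAt hx (n := 2)

theorem differentiableAt (hf : IsSmoothHom k f) (hx : x ≠ 0) : DifferentiableAt ℝ f x :=
  (hf.contDiffAt_two hx).differentiableAt two_ne_zero

theorem zero (k : ℤ) : IsSmoothHom k fun _ => 0 where
  contDiffOn := contDiffOn_const
  map_smul := by simp

theorem const (c : ℝ) : IsSmoothHom 0 fun _ => c where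
  contDiffOn := contDiffOn_const
  map_smul := by simp

theorem add (hf : IsSmoothHom k f) (hg : IsSmoothHom k g) :
    IsSmoothHom k fun x => f x + g x where
  contDiffOn := hf.contDiffOn.add hg.contDiffOn
  map_smul t ht x hx := by rw [hf.map_smul t ht x hx, hg.map_smul t ht x hx]; ring

theorem mul (hf : IsSmoothHom k f) (hg : IsSmoothHom l g) :
    IsSmoothHom (k + l) fun x => f x * g x where
  contDiffOn := hf.contDiffOn.mul hg.contDiffOn
  map_smul t ht x hx := by
    rw [hf.map_smul t ht x hx, hg.map_smul t ht x hx, zpow_add₀ ht.ne']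
    ring

theorem const_mul (c : ℝ) (hf : IsSmoothHom k f) : IsSmoothHom k fun x => c * f x := by
  simpa using (const c).mul hf

theorem sum {ι : Type*} (s : Finset ι) {F : ι → ℝ³ → ℝ} (hF : ∀ i ∈ s, IsSmoothHom k (F i)) :
    IsSmoothHom k fun x => ∑ i ∈ s, F i x where
  contDiffOn := ContDiffOn.sum fun i hi => (hF i hi).contDiffOn
  map_smul t ht x hx := by
    rw [Finset.mul_sum]
    exact Finset.sum_congr rfl fun i hi => (hF i hi).map_smul t ht x hx

theorem coord (i : Fin 3) : IsSmoothHom 1 fun x => x i where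
  contDiffOn := by fun_prop
  map_smul := by simp

theorem norm_zpow (k : ℤ) : IsSmoothHom k fun x => ‖x‖ ^ k where
  contDiffOn x hx := (contDiffAt_norm_zpow hx k).contDiffWithinAt
  map_smul t ht x _ := by rw [norm_smul, Real.norm_of_nonneg ht.le, mul_zpow]

theorem pd (hf : IsSmoothHom k f) (i : Fin 3) : IsSmoothHom (k - 1) (pd i f) where
  contDiffOn x hx := (contDiffAt_pd (hf.contDiffAt hx) le_rfl i).contDiffWithinAt
  map_smul t ht x hx := by
    have h : (fun y => f (t • y)) =ᶠ[𝓝 x] fun y => t ^ k * f y :=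
      eventually_nhds_of_ne_zero (hf.map_smul t ht) hx
    have h' := (pd_congr h i).self_of_nhds
    rw [pd_comp_smul, pd_const_mul _ (hf.differentiableAt hx)] at h'
    rw [zpow_sub_one₀ ht.ne']
    field_simp
    linarith

theorem lap (hf : IsSmoothHom k f) : IsSmoothHom (k - 2) (lap f) := by
  rw [show k - 2 = k - 1 - 1 by ring]
  exact sum _ fun i _ => (hf.pd i).pd i

theorem euler (hf : IsSmoothHom k f) (hx : x ≠ 0) : ∑ i, x i * _root_.pd i f x = k * f x := by
  have h_smul := hasDerivAt_comp_smul (t := 1) ((one_smul ℝ x).symm ▸ hf.differentiableAt hx)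
  have h_pow : HasDerivAt (fun t : ℝ => f (t • x)) (k * f x) 1 := by
    have h := (hasDerivAt_zpow k (1 : ℝ) (Or.inl one_ne_zero)).mul_const (f x)
    rw [one_zpow, mul_one] at h
    exact h.congr_of_eventuallyEq
      ((lt_mem_nhds one_pos).mono fun t ht => hf.map_smul t ht x hx)
  simpa only [one_smul] using h_smul.unique h_pow

theorem lap_norm_zpow_mul (hf : IsSmoothHom k f) (m : ℤ) (hx : x ≠ 0) :
    _root_.lap (fun y => ‖y‖ ^ m * f y) x =
      ‖x‖ ^ m * _root_.lap f x + m * (m + 1 + 2 * k) * (‖x‖ ^ (m - 2) * f x) := by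
  have h_euler : ∑ i, _root_.pd i (fun y => ‖y‖ ^ m) x * _root_.pd i f x =
      m * ‖x‖ ^ (m - 2) * (k * f x) := by
    simp only [pd_norm_zpow hx, mul_assoc, ← Finset.mul_sum, hf.euler hx]
  rw [lap_mul (contDiffAt_norm_zpow hx m) (hf.contDiffAt_two hx), h_euler, lap_norm_zpow hx]
  ring

end IsSmoothHom

/-- The Laplacian maps functions of degree `k` onto functions of degree `k - 2`, up to the
resonances `‖x‖⁻² h` with `h` harmonic of degree `k`. -/
def SolvableModHarmonics (k : ℤ) : Prop :=
  ∀ f, IsSmoothHom (k - 2) f → ∃ w h, IsSmoothHom k w ∧ IsSmoothHom k h ∧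
    (∀ x, x ≠ 0 → lap h x = 0) ∧ ∀ x, x ≠ 0 → lap w x = f x + ‖x‖ ^ (-2 : ℤ) * h x

/-- The ladder operator `w ↦ x · w - c ‖x‖² div w`; for `c = 1 / (2 k + 1)` it commutes with the
Laplacian on vector fields of degree `k`. -/
noncomputable def ladder (c : ℝ) (w : Fin 3 → ℝ³ → ℝ) : ℝ³ → ℝ := fun x =>
  ∑ i, x i * w i x + -c * (‖x‖ ^ (2 : ℤ) * ∑ i, pd i (w i) x)

section Ladder

variable {k : ℤ} {f : ℝ³ → ℝ} {w h : Fin 3 → ℝ³ → ℝ} {x : ℝ³}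

theorem ladder_congr {v w : Fin 3 → ℝ³ → ℝ} (c : ℝ) (h : ∀ i, v i =ᶠ[𝓝 x] w i) :
    ladder c v x = ladder c w x := by
  simp only [ladder, (h _).self_of_nhds, (pd_congr (h _) _).self_of_nhds]

theorem isSmoothHom_sum_coord_mul (hw : ∀ i, IsSmoothHom k (w i)) :
    IsSmoothHom (k + 1) fun x => ∑ i, x i * w i x :=
  .sum _ fun i _ => add_comm 1 k ▸ (IsSmoothHom.coord i).mul (hw i)

theorem isSmoothHom_sum_pd (hw : ∀ i, IsSmoothHom k (w i)) :
    IsSmoothHom (k - 1) fun x => ∑ i, pd i (w i) x :=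
  .sum _ fun i _ => (hw i).pd i

theorem IsSmoothHom.norm_sq_mul (hf : IsSmoothHom k f) :
    IsSmoothHom (k + 2) fun x => ‖x‖ ^ (2 : ℤ) * f x :=
  add_comm 2 k ▸ (IsSmoothHom.norm_zpow 2).mul hf

theorem isSmoothHom_ladder (c : ℝ) (hw : ∀ i, IsSmoothHom k (w i)) :
    IsSmoothHom (k + 1) (ladder c w) := by
  refine .add (isSmoothHom_sum_coord_mul hw) (.const_mul _ ?_)
  convert (isSmoothHom_sum_pd hw).norm_sq_mul using 1
  ring

theorem lap_sum_coord_mul (hw : ∀ i, ContDiffAt ℝ 2 (w i) x) :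
    lap (fun y => ∑ i, y i * w i y) x = ∑ i, x i * lap (w i) x + 2 * ∑ i, pd i (w i) x := by
  rw [lap_sum _ fun i _ => ContDiffAt.mul (by fun_prop) (hw i), Finset.mul_sum,
    ← Finset.sum_add_distrib]
  exact Finset.sum_congr rfl fun i _ => lap_coord_mul (hw i) i

theorem lap_sum_pd (hw : ∀ i, ContDiffAt ℝ 3 (w i) x) :
    lap (fun y => ∑ i, pd i (w i) y) x = ∑ i, pd i (lap (w i)) x := by
  rw [lap_sum _ fun i _ => contDiffAt_pd (hw i) (by norm_num) i]
  exact Finset.sum_congr rfl fun i _ => lap_pd (hw i) i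

theorem IsSmoothHom.lap_norm_sq_mul (hf : IsSmoothHom k f) (hx : x ≠ 0) :
    _root_.lap (fun y => ‖y‖ ^ (2 : ℤ) * f y) x =
      ‖x‖ ^ (2 : ℤ) * _root_.lap f x + 2 * (3 + 2 * k) * f x := by
  rw [hf.lap_norm_zpow_mul 2 hx]
  norm_num

theorem lap_ladder (hw : ∀ i, IsSmoothHom k (w i)) (hx : x ≠ 0) :
    lap (ladder (1 / (2 * k + 1)) w) x = ladder (1 / (2 * k + 1)) (fun i => lap (w i)) x := by
  have hk : (2 * (k : ℝ) + 1) ≠ 0 := by exact_mod_cast (by omega : 2 * k + 1 ≠ 0)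
  have hr2 := (isSmoothHom_sum_pd hw).norm_sq_mul.contDiffAt_two hx
  unfold ladder
  rw [lap_add ((isSmoothHom_sum_coord_mul hw).contDiffAt_two hx) (contDiffAt_const.mul hr2),
    lap_const_mul _ hr2, (isSmoothHom_sum_pd hw).lap_norm_sq_mul hx,
    lap_sum_coord_mul fun i => (hw i).contDiffAt_two hx,
    lap_sum_pd fun i => (hw i).contDiffAt hx (n := 3)]
  push_cast
  field_simp
  ring

theorem ladder_pd (c : ℝ) (hf : IsSmoothHom k f) (hx : x ≠ 0) :
    ladder c (fun i => pd i f) x = k * f x - c * (‖x‖ ^ (2 : ℤ) * lap f x) := by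
  rw [ladder, hf.euler hx, lap]
  ring

theorem ladder_add {v : Fin 3 → ℝ³ → ℝ} (c : ℝ) (hv : ∀ i, DifferentiableAt ℝ (v i) x)
    (hw : ∀ i, DifferentiableAt ℝ (w i) x) :
    ladder c (fun i y => v i y + w i y) x = ladder c v x + ladder c w x := by
  simp only [ladder, pd_add (hv _) (hw _), mul_add, Finset.sum_add_distrib]
  ring

theorem ladder_norm_zpow_mul (c : ℝ) (hw : ∀ i, DifferentiableAt ℝ (w i) x) (hx : x ≠ 0) :
    ladder c (fun i y => ‖y‖ ^ (-2 : ℤ) * w i y) x =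
      ‖x‖ ^ (-2 : ℤ) * ((1 + 2 * c) * ladder c w x) + 2 * c ^ 2 * ∑ i, pd i (w i) x := by
  have hr := (contDiffAt_norm_zpow (n := 1) hx (-2)).differentiableAt one_ne_zero
  have hx' : ‖x‖ ≠ 0 := norm_ne_zero_iff.2 hx
  have hdiv : ∑ i, pd i (fun y => ‖y‖ ^ (-2 : ℤ) * w i y) x =
      ‖x‖ ^ (-2 : ℤ) * ∑ i, pd i (w i) x - 2 * ‖x‖ ^ (-4 : ℤ) * ∑ i, x i * w i x := by
    simp only [pd_mul hr (hw _), pd_norm_zpow hx, Finset.mul_sum, ← Finset.sum_sub_distrib]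
    exact Finset.sum_congr rfl fun i _ => by norm_num; ring
  have hx_mul : ∑ i, x i * (‖x‖ ^ (-2 : ℤ) * w i x) = ‖x‖ ^ (-2 : ℤ) * ∑ i, x i * w i x := by
    rw [Finset.mul_sum]
    exact Finset.sum_congr rfl fun i _ => by ring
  rw [ladder, ladder, hdiv, hx_mul]
  simp only [zpow_neg, zpow_ofNat]
  field_simp
  ring

theorem lap_ladder_eq_zero (hh : ∀ i, IsSmoothHom k (h i))
    (hharm : ∀ i x, x ≠ 0 → lap (h i) x = 0) (hx : x ≠ 0) :
    lap (ladder (1 / (2 * k + 1)) h) x = 0 := by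
  rw [lap_ladder hh hx,
    ladder_congr (w := fun _ _ => 0) _ fun i => eventually_nhds_of_ne_zero (hharm i) hx]
  simp [ladder, pd_const]

theorem lap_norm_sq_mul_sum_pd (hh : ∀ i, IsSmoothHom k (h i))
    (hharm : ∀ i x, x ≠ 0 → lap (h i) x = 0) (hx : x ≠ 0) :
    lap (fun y => ‖y‖ ^ (2 : ℤ) * ∑ i, pd i (h i) y) x =
      2 * (2 * k + 1) * ∑ i, pd i (h i) x := by
  have hdiv : lap (fun y => ∑ i, pd i (h i) y) x = 0 := by
    rw [lap_sum_pd fun i => (hh i).contDiffAt hx (n := 3)]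
    refine Finset.sum_eq_zero fun i _ => ?_
    rw [(pd_congr (eventually_nhds_of_ne_zero (hharm i) hx) i).self_of_nhds, pd_const]
  rw [(isSmoothHom_sum_pd hh).lap_norm_sq_mul hx, hdiv]
  push_cast
  ring

theorem lap_ladder_of_lap_eq_pd_add (hf : IsSmoothHom (k - 1) f) (hw : ∀ i, IsSmoothHom k (w i))
    (hh : ∀ i, IsSmoothHom k (h i))
    (hlap : ∀ i x, x ≠ 0 → lap (w i) x = pd i f x + ‖x‖ ^ (-2 : ℤ) * h i x) (hx : x ≠ 0) {c : ℝ}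
    (hc : c = 1 / (2 * k + 1)) :
    lap (ladder c w) x = (k - 1) * f x - c * (‖x‖ ^ (2 : ℤ) * lap f x) +
      (‖x‖ ^ (-2 : ℤ) * ((1 + 2 * c) * ladder c h x) + 2 * c ^ 2 * ∑ i, pd i (h i) x) := by
  have hr := (contDiffAt_norm_zpow (n := 1) hx (-2)).differentiableAt one_ne_zero
  have hh' := fun i => (hh i).differentiableAt hx
  rw [hc, lap_ladder hw hx, ← hc,
    ladder_congr c fun i => eventually_nhds_of_ne_zero (hlap i) hx,
    ladder_add c (fun i => (hf.pd i).differentiableAt hx) (fun i => hr.fun_mul (hh' i)),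
    ladder_pd c hf hx, ladder_norm_zpow_mul c hh' hx]
  push_cast
  ring

/-- With `c = 1 / (2 k + 1)` and `Δ w = ∇ f + ‖x‖⁻² h`, the field `v = ladder w + c ‖x‖² f` has
`Δ v = (k + 1) f + (1 + 2 c) ‖x‖⁻² ladder h + 2 c² div h`, and `2 div h = c Δ (‖x‖² div h)`. -/
theorem SolvableModHarmonics.succ (hk : k ≠ -1) (H : SolvableModHarmonics k) :
    SolvableModHarmonics (k + 1) := by
  intro f hf
  rw [show k + 1 - 2 = k - 1 by ring] at hf
  choose w h hw hh hharm hlap using fun i =>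
    H (pd i f) ((by ring : k - 1 - 1 = k - 2) ▸ hf.pd i)
  obtain ⟨c, hc⟩ : ∃ c : ℝ, c = 1 / (2 * k + 1) := ⟨_, rfl⟩
  have hNc : (2 * k + 1) * c = 1 := by
    rw [hc, mul_one_div_cancel]
    exact_mod_cast (by omega : 2 * k + 1 ≠ 0)
  have hk1 : (k + 1 : ℝ)⁻¹ * (k + 1) = 1 :=
    inv_mul_cancel₀ (by exact_mod_cast (by omega : k + 1 ≠ 0))
  have hf2 : IsSmoothHom (k + 1) fun x => ‖x‖ ^ (2 : ℤ) * f x :=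
    (by ring : k - 1 + 2 = k + 1) ▸ hf.norm_sq_mul
  have hdiv2 : IsSmoothHom (k + 1) fun x => ‖x‖ ^ (2 : ℤ) * ∑ i, pd i (h i) x :=
    (by ring : k - 1 + 2 = k + 1) ▸ (isSmoothHom_sum_pd hh).norm_sq_mul
  have hladder := isSmoothHom_ladder c hw
  have hv := hladder.add ((hf2.const_mul c).add (hdiv2.const_mul (-c ^ 3)))
  refine ⟨_, _, hv.const_mul (1 / (k + 1)),
    (isSmoothHom_ladder c hh).const_mul ((1 + 2 * c) / (k + 1)), fun x hx => ?_, fun x hx => ?_⟩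
  · rw [lap_const_mul _ ((isSmoothHom_ladder c hh).contDiffAt_two hx),
      hc, lap_ladder_eq_zero hh hharm hx, mul_zero]
  · rw [lap_const_mul _ (hv.contDiffAt_two hx), lap_add (hladder.contDiffAt_two hx)
      (((hf2.const_mul c).add (hdiv2.const_mul _)).contDiffAt_two hx),
      lap_add ((hf2.const_mul c).contDiffAt_two hx) ((hdiv2.const_mul _).contDiffAt_two hx),
      lap_const_mul _ (hf2.contDiffAt_two hx), lap_const_mul _ (hdiv2.contDiffAt_two hx),
      hf.lap_norm_sq_mul hx, lap_norm_sq_mul_sum_pd hh hharm hx,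
      lap_ladder_of_lap_eq_pd_add hf hw hh hlap hx hc]
    push_cast
    linear_combination (k + 1 : ℝ)⁻¹ * (2 * f x - 2 * c ^ 2 * ∑ i, pd i (h i) x) * hNc + f x * hk1

end Ladder

/-- Multiplication by `‖x‖ ^ (-2 k - 1)` commutes with the Laplacian on functions of degree `k`. -/
theorem SolvableModHarmonics.kelvin {k : ℤ} (H : SolvableModHarmonics k) :
    SolvableModHarmonics (-1 - k) := by
  have kelvin_lap : ∀ {u : ℝ³ → ℝ}, IsSmoothHom k u → ∀ x, x ≠ 0 →
      lap (fun y => ‖y‖ ^ (-2 * k - 1) * u y) x = ‖x‖ ^ (-2 * k - 1) * lap u x := by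
    intro u hu x hx
    rw [hu.lap_norm_zpow_mul _ hx]
    push_cast
    ring
  have kelvin_hom : ∀ {u : ℝ³ → ℝ}, IsSmoothHom k u →
      IsSmoothHom (-1 - k) fun y => ‖y‖ ^ (-2 * k - 1) * u y := fun hu => by
    convert (IsSmoothHom.norm_zpow (-2 * k - 1)).mul hu using 1
    ring
  intro f hf
  have hf' : IsSmoothHom (k - 2) fun x => ‖x‖ ^ (2 * k + 1) * f x := by
    convert (IsSmoothHom.norm_zpow (2 * k + 1)).mul hf using 1
    ring
  obtain ⟨w, h, hw, hh, hharm, hlap⟩ := H _ hf'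
  refine ⟨_, _, kelvin_hom hw, kelvin_hom hh, fun x hx => ?_, fun x hx => ?_⟩
  · rw [kelvin_lap hh x hx, hharm x hx, mul_zero]
  · have h_cancel : ‖x‖ ^ (-2 * k - 1) * ‖x‖ ^ (2 * k + 1) = 1 := by
      rw [← zpow_add₀ (norm_ne_zero_iff.2 hx), show -2 * k - 1 + (2 * k + 1) = 0 by ring,
        zpow_zero]
    rw [kelvin_lap hw x hx, hlap x hx]
    linear_combination f x * h_cancel

theorem SolvableModHarmonics.of_zero (H : SolvableModHarmonics 0) (k : ℤ) :
    SolvableModHarmonics k := by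
  have h_nonneg : ∀ n : ℕ, SolvableModHarmonics n := fun n => by
    induction n with
    | zero => exact H
    | succ n ih => exact_mod_cast ih.succ (by omega)
  obtain ⟨n, rfl⟩ | ⟨n, rfl⟩ : (∃ n : ℕ, k = n) ∨ ∃ n : ℕ, k = -1 - n := by
    cases k with
    | ofNat n => exact .inl ⟨n, rfl⟩
    | negSucc n => exact .inr ⟨n, by omega⟩
  exacts [h_nonneg n, (h_nonneg n).kelvin]

section NewtonPotential

variable {f g G : ℝ³ → ℝ} {x : ℝ³}

theorem hasCompactSupport_pd (hG : HasCompactSupport G) (i : Fin 3) :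
    HasCompactSupport (pd i G) :=
  hG.fderiv_apply ℝ _

theorem hasCompactSupport_lap (hG : HasCompactSupport G) : HasCompactSupport (lap G) := by
  refine hG.of_isClosed_subset (isClosed_tsupport _)
    (closure_minimal (fun x hx => ?_) (isClosed_tsupport _))
  by_contra h
  have hG₀ : G =ᶠ[𝓝 x] fun _ => 0 := notMem_tsupport_iff_eventuallyEq.1 h
  exact hx ((lap_congr hG₀).self_of_nhds.trans (lap_const 0))

theorem contDiff_lap {m n : WithTop ℕ∞} (hG : ContDiff ℝ n G) (hmn : m + 2 ≤ n) :
    ContDiff ℝ m (lap G) :=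
  contDiff_iff_contDiffAt.2 fun _ => contDiffAt_lap hG.contDiffAt hmn

theorem integral_mul_pd (hf : ContDiff ℝ 1 f) (hG : ContDiff ℝ 1 G) (hGc : HasCompactSupport G)
    (i : Fin 3) : ∫ x, f x * pd i G x = -∫ x, pd i f x * G x := by
  have hf' : Continuous (pd i f) := (contDiff_pd (m := 0) hf (by simp) i).continuous
  have hG' : Continuous (pd i G) := (contDiff_pd (m := 0) hG (by simp) i).continuous
  refine integral_mul_fderiv_eq_neg_fderiv_mul_of_integrable ?_ ?_ ?_
    (fun x _ => hf.differentiable one_ne_zero x) fun x _ => hG.differentiable one_ne_zero x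
  · exact (hf'.mul hG.continuous).integrable_of_hasCompactSupport hGc.mul_left
  · exact (hf.continuous.mul hG').integrable_of_hasCompactSupport
      (hasCompactSupport_pd hGc i).mul_left
  · exact (hf.continuous.mul hG.continuous).integrable_of_hasCompactSupport hGc.mul_left

theorem integral_mul_lap (hf : ContDiff ℝ 2 f) (hG : ContDiff ℝ 2 G) (hGc : HasCompactSupport G) :
    ∫ x, f x * lap G x = ∫ x, lap f x * G x := by
  have hf₁ := fun i => contDiff_pd (m := 1) hf (by norm_num) i
  have hG₁ := fun i => contDiff_pd (m := 1) hG (by norm_num) i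
  have hf₂ := fun i => (contDiff_pd (m := 0) (hf₁ i) (by norm_num) i).continuous
  have hG₂ := fun i => (contDiff_pd (m := 0) (hG₁ i) (by norm_num) i).continuous
  have hGc' := hasCompactSupport_pd hGc
  simp only [lap, Finset.mul_sum, Finset.sum_mul]
  rw [integral_finsetSum (f := fun i x => f x * pd i (pd i G) x) _ fun i _ =>
      (hf.continuous.mul (hG₂ i)).integrable_of_hasCompactSupport
      (hasCompactSupport_pd (hGc' i) i).mul_left,
    integral_finsetSum (f := fun i x => pd i (pd i f) x * G x) _ fun i _ =>
      ((hf₂ i).mul hG.continuous).integrable_of_hasCompactSupport hGc.mul_left]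
  refine Finset.sum_congr rfl fun i _ => ?_
  rw [integral_mul_pd (hf.of_le (by norm_num)) (hG₁ i) (hGc' i),
    integral_mul_pd (hf₁ i) (hG.of_le (by norm_num)) hGc, neg_neg]

theorem contDiff_add_norm_sq_rpow {a : ℝ} (ha : 0 < a) (p : ℝ) {n : WithTop ℕ∞} :
    ContDiff ℝ n fun y : ℝ³ => (a + ‖y‖ ^ 2) ^ p :=
  (contDiff_const.add (contDiff_norm_sq ℝ)).rpow_const_of_ne fun _ => by positivity

theorem pd_add_norm_sq_rpow {a : ℝ} (ha : 0 < a) (p : ℝ) (i : Fin 3) :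
    pd i (fun y => (a + ‖y‖ ^ 2) ^ p) x = 2 * p * ((a + ‖x‖ ^ 2) ^ (p - 1) * x i) := by
  have hd : DifferentiableAt ℝ (fun y : ℝ³ => ‖y‖ ^ 2) x :=
    (contDiff_norm_sq ℝ (n := 1)).differentiable one_ne_zero x
  rw [pd_scomp (f := fun y => a + ‖y‖ ^ 2) (φ := fun s => s ^ p)
    (Real.hasDerivAt_rpow_const (Or.inl (by positivity))) ((differentiableAt_const a).fun_add hd),
    pd_add (differentiableAt_const a) hd, pd_const, pd_norm_sq]
  ring

theorem lap_add_norm_sq_rpow_neg_half {a : ℝ} (ha : 0 < a) :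
    lap (fun y => (a + ‖y‖ ^ 2) ^ (-1 / 2 : ℝ)) x = -(3 * a * (a + ‖x‖ ^ 2) ^ (-5 / 2 : ℝ)) := by
  have hd := (contDiff_add_norm_sq_rpow ha (-1 / 2 - 1) (n := 1)).differentiable one_ne_zero x
  have h : ∀ i, pd i (pd i fun y => (a + ‖y‖ ^ 2) ^ (-1 / 2 : ℝ)) x =
      3 * (a + ‖x‖ ^ 2) ^ (-5 / 2 : ℝ) * (x i * x i) - (a + ‖x‖ ^ 2) ^ (-3 / 2 : ℝ) := by
    intro i
    rw [show pd i (fun y => (a + ‖y‖ ^ 2) ^ (-1 / 2 : ℝ)) = _ from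
      funext fun y => pd_add_norm_sq_rpow (x := y) ha (-1 / 2) i,
      pd_const_mul _ (hd.fun_mul (by fun_prop)), pd_mul hd (by fun_prop),
      pd_add_norm_sq_rpow ha, pd_coord]
    norm_num
    ring
  have h_exp : (a + ‖x‖ ^ 2) ^ (-3 / 2 : ℝ) = (a + ‖x‖ ^ 2) ^ (-5 / 2 : ℝ) * (a + ‖x‖ ^ 2) := by
    rw [← Real.rpow_add_one (by positivity)]
    norm_num
  simp only [lap, h, Finset.sum_sub_distrib, ← Finset.mul_sum, sum_coord_sq, h_exp,
    Finset.sum_const, Finset.card_univ, Fintype.card_fin, nsmul_eq_mul]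
  push_cast
  ring

theorem locallyIntegrable_inv_norm : LocallyIntegrable fun y : ℝ³ => ‖y‖⁻¹ :=
  locallyIntegrable_of_norm_le_rpow (C := 1) (α := 1) (by simp) (by norm_num)
    (.of_forall fun y => by simp [Real.rpow_neg_one]) (by fun_prop)

theorem integrable_one_add_norm_sq_rpow :
    Integrable fun y : ℝ³ => 3 * (1 + ‖y‖ ^ 2) ^ (-5 / 2 : ℝ) :=
  (integrable_rpow_neg_one_add_norm_sq (by norm_num)).const_mul 3

theorem integral_one_add_norm_sq_rpow :
    ∫ y : ℝ³, 3 * (1 + ‖y‖ ^ 2) ^ (-5 / 2 : ℝ) = 4 * Real.pi := by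
  have hderiv : ∀ r ∈ Ioi (0 : ℝ), HasDerivAt (fun s => (1 - (1 + s ^ 2)⁻¹) ^ (3 / 2 : ℝ))
      (r ^ 2 * (3 * (1 + r ^ 2) ^ (-5 / 2 : ℝ))) r := fun r (hr : 0 < r) => by
    have hpos : 0 < 1 + r ^ 2 := by positivity
    have hq : 1 - (1 + r ^ 2)⁻¹ = r ^ 2 * (1 + r ^ 2)⁻¹ := by field_simp; ring
    convert ((((hasDerivAt_pow 2 r).const_add 1).inv hpos.ne').const_sub 1).rpow_const
      (p := 3 / 2) (Or.inr (by norm_num)) using 1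
    · ext s
      simp
    simp only [Pi.inv_apply, hq]
    rw [show (3 / 2 - 1 : ℝ) = 1 / 2 by norm_num, Real.mul_rpow (by positivity) (by positivity),
      ← Real.sqrt_eq_rpow, Real.sqrt_sq hr.le, Real.inv_rpow hpos.le, ← Real.rpow_neg hpos.le,
      show (-5 / 2 : ℝ) = -(1 / 2) - (2 : ℕ) by norm_num, Real.rpow_sub_natCast hpos.ne']
    field_simp
    push_cast
    ring
  have hlim : Tendsto (fun r : ℝ => (1 - (1 + r ^ 2)⁻¹) ^ (3 / 2 : ℝ)) atTop (𝓝 1) := by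
    have h := ((tendsto_atTop_add_const_left _ (1 : ℝ)
      (tendsto_pow_atTop (α := ℝ) two_ne_zero)).inv_tendsto_atTop.const_sub 1).rpow_const
      (p := 3 / 2) (by norm_num)
    simpa using h
  have hcont : Continuous fun r : ℝ => (1 - (1 + r ^ 2)⁻¹) ^ (3 / 2 : ℝ) :=
    (continuous_const.sub ((by fun_prop : Continuous fun r : ℝ => 1 + r ^ 2).inv₀
      fun r => by positivity)).rpow_const fun r => Or.inr (by norm_num)
  have hradial := integral_Ioi_of_hasDerivAt_of_nonneg hcont.continuousWithinAt hderiv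
    (fun r _ => by positivity) hlim
  rw [integral_fun_norm_addHaar volume fun r => 3 * (1 + r ^ 2) ^ (-5 / 2 : ℝ)]
  simp only [finrank_euclideanSpace, Fintype.card_fin, smul_eq_mul, Nat.add_one_sub_one, hradial]
  have hball : volume.real (Metric.ball (0 : ℝ³) 1) = Real.pi * 4 / 3 := by
    rw [Measure.real, EuclideanSpace.volume_ball_fin_three, ENNReal.ofReal_one, one_pow, one_mul,
      ENNReal.toReal_ofReal (by positivity)]
  rw [hball]
  simp only [ne_eq, OfNat.ofNat_ne_zero, not_false_eq_true, zero_pow, add_zero, inv_one, sub_self,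
    div_eq_zero_iff, or_self, Real.zero_rpow, sub_zero, mul_one, nsmul_eq_mul, Nat.cast_ofNat]
  ring

theorem integral_add_norm_sq_rpow_mul_lap (hG : ContDiff ℝ 2 G) (hGc : HasCompactSupport G)
    {ε : ℝ} (hε : 0 < ε) :
    ∫ y, (ε ^ 2 + ‖y‖ ^ 2) ^ (-1 / 2 : ℝ) * lap G y =
      -∫ z, 3 * (1 + ‖z‖ ^ 2) ^ (-5 / 2 : ℝ) * G (ε • z) := by
  have hscale : ∀ z : ℝ³, 3 * ε ^ 2 * (ε ^ 2 + ‖ε • z‖ ^ 2) ^ (-5 / 2 : ℝ) * G (ε • z) =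
      (ε ^ 3)⁻¹ * (3 * (1 + ‖z‖ ^ 2) ^ (-5 / 2 : ℝ) * G (ε • z)) := fun z => by
    have h : (ε ^ 2) ^ (-5 / 2 : ℝ) = (ε ^ 5)⁻¹ := by
      rw [← Real.rpow_natCast, ← Real.rpow_mul hε.le, ← Real.rpow_natCast, ← Real.rpow_neg hε.le]
      norm_num
    rw [norm_smul, Real.norm_of_nonneg hε.le, mul_pow,
      show ε ^ 2 + ε ^ 2 * ‖z‖ ^ 2 = ε ^ 2 * (1 + ‖z‖ ^ 2) by ring,
      Real.mul_rpow (by positivity) (by positivity), h]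
    field_simp
  have hsubst := Measure.integral_comp_smul volume
    (fun y : ℝ³ => 3 * ε ^ 2 * (ε ^ 2 + ‖y‖ ^ 2) ^ (-5 / 2 : ℝ) * G y) ε
  simp only [hscale, integral_const_mul, finrank_euclideanSpace, Fintype.card_fin, smul_eq_mul,
    abs_of_pos (inv_pos.2 (pow_pos hε 3))] at hsubst
  rw [integral_mul_lap (contDiff_add_norm_sq_rpow (by positivity) _) hG hGc]
  simp only [lap_add_norm_sq_rpow_neg_half (pow_pos hε 2), neg_mul, integral_neg]
  rw [mul_left_cancel₀ (by positivity) hsubst]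

theorem tendsto_integral_add_norm_sq_rpow_mul (hg : Continuous g) (hgc : HasCompactSupport g) :
    Tendsto (fun ε : ℝ => ∫ y, (ε ^ 2 + ‖y‖ ^ 2) ^ (-1 / 2 : ℝ) * g y) (𝓝[>] 0)
      (𝓝 (∫ y, ‖y‖⁻¹ * g y)) := by
  have hpow : ∀ r : ℝ, 0 < r → (r ^ 2) ^ (-1 / 2 : ℝ) = r⁻¹ := fun r hr => by
    rw [← Real.rpow_natCast, ← Real.rpow_mul hr.le, ← Real.rpow_neg_one]
    norm_num
  have hae : ∀ᵐ y : ℝ³, y ≠ 0 := by simp [ae_iff, measure_singleton]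
  refine tendsto_integral_filter_of_dominated_convergence (fun y => ‖‖y‖⁻¹ * g y‖) ?_ ?_
    (locallyIntegrable_inv_norm.integrable_smul_right_of_hasCompactSupport hg hgc).norm ?_
  · filter_upwards [self_mem_nhdsWithin] with ε (hε : 0 < ε)
    exact ((contDiff_add_norm_sq_rpow (n := 0) (pow_pos hε 2) _).continuous.mul
      hg).aestronglyMeasurable
  · filter_upwards [self_mem_nhdsWithin] with ε (hε : 0 < ε)
    filter_upwards [hae] with y hy
    have hy' := norm_pos_iff.2 hy
    rw [norm_mul, norm_mul, Real.norm_of_nonneg (by positivity), norm_inv, norm_norm, ← hpow _ hy']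
    gcongr ?_ * _
    exact Real.rpow_le_rpow_of_nonpos (by positivity) (by linarith [sq_nonneg ε]) (by norm_num)
  · filter_upwards [hae] with y hy
    have hy' := norm_pos_iff.2 hy
    rw [← hpow _ hy']
    have hc : ContinuousAt (fun ε : ℝ => (ε ^ 2 + ‖y‖ ^ 2) ^ (-1 / 2 : ℝ) * g y) 0 :=
      ((by fun_prop : ContinuousAt (fun ε : ℝ => ε ^ 2 + ‖y‖ ^ 2) 0).rpow_const
        (Or.inl (by positivity))).mul_const _
    simpa using hc.tendsto.mono_left nhdsWithin_le_nhds

theorem tendsto_integral_one_add_norm_sq_rpow_mul (hg : Continuous g) (hgc : HasCompactSupport g) :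
    Tendsto (fun ε : ℝ => ∫ z, 3 * (1 + ‖z‖ ^ 2) ^ (-5 / 2 : ℝ) * g (ε • z)) (𝓝[>] 0)
      (𝓝 (4 * Real.pi * g 0)) := by
  obtain ⟨C, hC⟩ := hg.bounded_above_of_compact_support hgc
  rw [← integral_one_add_norm_sq_rpow, ← integral_mul_const]
  refine tendsto_integral_filter_of_dominated_convergence
    (fun z => 3 * (1 + ‖z‖ ^ 2) ^ (-5 / 2 : ℝ) * C) (.of_forall fun ε => ?_)
    (.of_forall fun ε => .of_forall fun z => ?_) (integrable_one_add_norm_sq_rpow.mul_const C)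
    (.of_forall fun z => ?_)
  · exact integrable_one_add_norm_sq_rpow.aestronglyMeasurable.mul
      (hg.comp (continuous_const_smul ε)).aestronglyMeasurable
  · rw [norm_mul, Real.norm_of_nonneg (by positivity)]
    gcongr
    exact hC _
  · have hc : Continuous fun ε : ℝ => g (ε • z) := by fun_prop
    simpa using ((hc.tendsto 0).mono_left nhdsWithin_le_nhds).const_mul _

/-- Replacing `‖y‖⁻¹` by `(ε² + ‖y‖²) ^ (-1/2)` moves the Laplacian to a multiple of an approximate
identity. -/
theorem integral_inv_norm_mul_lap (hG : ContDiff ℝ 2 G) (hGc : HasCompactSupport G) :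
    ∫ y, ‖y‖⁻¹ * lap G y = -(4 * Real.pi * G 0) := by
  refine tendsto_nhds_unique (tendsto_integral_add_norm_sq_rpow_mul
    (contDiff_lap (m := 0) hG (by norm_num)).continuous (hasCompactSupport_lap hGc))
    ((tendsto_integral_one_add_norm_sq_rpow_mul hG.continuous hGc).neg.congr' ?_)
  filter_upwards [self_mem_nhdsWithin] with ε hε
  exact (integral_add_norm_sq_rpow_mul_lap hG hGc hε).symm

/-- The solution of `lap u = -4 π G` given by the convolution of `G` with `‖·‖⁻¹`. -/
noncomputable def newtonPotential (G : ℝ³ → ℝ) (x : ℝ³) : ℝ := ∫ z, ‖z‖⁻¹ * G (x - z)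

theorem newtonPotential_eq_convolution :
    newtonPotential G = (fun z => ‖z‖⁻¹) ⋆[ContinuousLinearMap.mul ℝ ℝ, volume] G := rfl

theorem contDiff_newtonPotential (hG : ContDiff ℝ ∞ G) (hGc : HasCompactSupport G) :
    ContDiff ℝ ∞ (newtonPotential G) :=
  hGc.contDiff_convolution_right (ContinuousLinearMap.mul ℝ ℝ) locallyIntegrable_inv_norm hG

theorem pd_newtonPotential (hG : ContDiff ℝ 1 G) (hGc : HasCompactSupport G) (i : Fin 3) :
    pd i (newtonPotential G) = newtonPotential (pd i G) := by
  ext x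
  rw [newtonPotential_eq_convolution, pd, (hGc.hasFDerivAt_convolution_right _
    locallyIntegrable_inv_norm hG x).fderiv, convolution_precompR_apply _
    locallyIntegrable_inv_norm (hGc.fderiv ℝ) (hG.continuous_fderiv one_ne_zero)]
  rfl

theorem lap_newtonPotential (hG : ContDiff ℝ 2 G) (hGc : HasCompactSupport G) :
    lap (newtonPotential G) x = -(4 * Real.pi * G x) := by
  have htranslate : ∀ (F : ℝ³ → ℝ) i, pd i (fun z => F (x + z)) = fun z => pd i F (x + z) :=
    fun F i => by
      ext z
      simp [pd, fderiv_comp_add_left]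
  have hlap : lap (newtonPotential G) x = ∫ z, ‖z‖⁻¹ * lap G (x - z) := by
    have hG₁ := fun i => contDiff_pd (m := 1) hG (by norm_num) i
    have hG₂ := fun i => (contDiff_pd (m := 0) (hG₁ i) (by norm_num) i).continuous
    have hGc₁ := hasCompactSupport_pd hGc
    simp only [lap, pd_newtonPotential (hG.of_le (by norm_num)) hGc,
      pd_newtonPotential (hG₁ _) (hGc₁ _), Finset.mul_sum]
    exact (integral_finsetSum _ fun i _ =>
      (hasCompactSupport_pd (hGc₁ i) i).convolutionExists_right (.mul ℝ ℝ)
        locallyIntegrable_inv_norm (hG₂ i) x).symm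
  have hreflect : ∫ z, ‖z‖⁻¹ * lap G (x - z) = ∫ z, ‖z‖⁻¹ * lap (fun y => G (x + y)) z := by
    rw [← integral_neg_eq_self]
    simp only [lap, htranslate, norm_neg, sub_neg_eq_add]
  have hGx : ContDiff ℝ 2 fun y => G (x + y) := hG.comp (contDiff_const.add contDiff_id)
  have hGcx : HasCompactSupport fun y => G (x + y) := hGc.comp_homeomorph (Homeomorph.addLeft x)
  rw [hlap, hreflect, integral_inv_norm_mul_lap hGx hGcx, add_zero]

theorem newtonPotential_eq_integral_inv_norm_sub_mul :
    newtonPotential G x = ∫ y, ‖x - y‖⁻¹ * G y := by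
  rw [newtonPotential, ← integral_sub_left_eq_self _ volume x]
  simp

open EuclideanGeometry in
theorem integral_comp_inversion (F : ℝ³ → ℝ) :
    ∫ y, (‖y‖ ^ 6)⁻¹ * F (inversion 0 1 y) = ∫ y, F y := by
  have hinv : Involutive (inversion (0 : ℝ³) 1) := fun y => inversion_inversion 0 one_ne_zero y
  have himage : inversion (0 : ℝ³) 1 '' {0}ᶜ = {0}ᶜ := by
    rw [image_compl_eq hinv.bijective, image_singleton, inversion_self]
  have hdet : ∀ y : ℝ³, |((1 / dist y 0) ^ 2 • (((ℝ ∙ (y - 0))ᗮ.reflection : ℝ³ ≃L[ℝ] ℝ³) :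
      ℝ³ →L[ℝ] ℝ³)).det| = (‖y‖ ^ 6)⁻¹ := fun y => by
    have hrefl := congrArg abs ((ℝ ∙ (y - 0))ᗮ.det_reflection)
    rw [abs_neg_one_pow] at hrefl
    have hsmul := LinearMap.det_smul ((1 / dist y 0) ^ 2)
      ((ℝ ∙ (y - 0))ᗮ.reflection.toLinearEquiv : ℝ³ →ₗ[ℝ] ℝ³)
    rw [finrank_euclideanSpace, Fintype.card_fin] at hsmul
    refine (congrArg abs hsmul).trans ?_
    rw [abs_mul, hrefl, dist_zero_right, abs_of_nonneg (by positivity)]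
    ring
  have h := integral_image_eq_integral_abs_det_fderiv_smul volume
    (measurableSet_singleton (0 : ℝ³)).compl
    (fun y hy => (hasFDerivAt_inversion (R := 1) hy).hasFDerivWithinAt) hinv.injective.injOn F
  simp only [himage, restrict_compl_singleton, smul_eq_mul] at h
  rw [h]
  exact integral_congr_ae (.of_forall fun y => by simp only [hdet])

open EuclideanGeometry in
/-- The Kelvin transform of a source `G` of the Newton potential: the inverted source, with the
weight that leaves the potential unchanged on the unit sphere. -/
noncomputable def kelvinSource (G : ℝ³ → ℝ) (y : ℝ³) : ℝ := (‖y‖ ^ 5)⁻¹ * G (inversion 0 1 y)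

open EuclideanGeometry in
theorem newtonPotential_kelvinSource (hx : ‖x‖ = 1) :
    newtonPotential (kelvinSource G) x = newtonPotential G x := by
  rw [newtonPotential_eq_integral_inv_norm_sub_mul, newtonPotential_eq_integral_inv_norm_sub_mul,
    ← integral_comp_inversion fun y => ‖x - y‖⁻¹ * G y]
  refine integral_congr_ae ?_
  filter_upwards [show ∀ᵐ y : ℝ³, y ≠ 0 by simp [ae_iff, measure_singleton]] with y hy
  have hx0 : x ≠ 0 := norm_ne_zero_iff.1 (by simp [hx])
  have hdist : ‖x - inversion 0 1 y‖ = ‖x - y‖ / ‖y‖ := by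
    have h := dist_inversion_inversion hx0 hy 1
    rw [inversion_of_mem_sphere (by simpa using hx)] at h
    simpa [dist_eq_norm, hx, div_eq_inv_mul] using h
  have hy' := norm_ne_zero_iff.2 hy
  rw [kelvinSource, hdist]
  field_simp

end NewtonPotential

section ParametricIntegral

variable {E F : Type*} [NormedAddCommGroup E] [NormedSpace ℝ E] [NormedAddCommGroup F]
  [NormedSpace ℝ F] {f : E → ℝ → F}

/-- Up to a cutoff in `t`, the integral over `[0, 1]` is the value at `0` of the convolution of
`f x (-·)` with the indicator function of `[0, 1]`. -/
theorem contDiff_integral_zero_one {n : ℕ∞} (hf : ContDiff ℝ n (uncurry f)) :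
    ContDiff ℝ n fun x => ∫ t in (0 : ℝ)..1, f x t := by
  let ρ : ContDiffBump (0 : ℝ) := ⟨1, 2, one_pos, one_lt_two⟩
  have hg : ContDiff ℝ n (uncurry fun x t => ρ t • f x (-t)) :=
    (ρ.contDiff.comp contDiff_snd).smul (hf.comp (contDiff_fst.prodMk contDiff_snd.neg))
  have h_conv := contDiffOn_convolution_right_with_param_comp
    (ContinuousLinearMap.lsmul ℝ ℝ) (μ := volume)
    (f := (Icc (0 : ℝ) 1).indicator fun _ => (1 : ℝ)) (g := fun x t => ρ t • f x (-t))
    (v := fun _ : E => (0 : ℝ)) contDiffOn_const isOpen_univ ρ.hasCompactSupport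
    (fun x t _ ht => by rw [image_eq_zero_of_notMem_tsupport ht, zero_smul])
    ((locallyIntegrable_const _).indicator measurableSet_Icc) hg.contDiffOn
  convert contDiffOn_univ.1 h_conv using 2 with x
  rw [intervalIntegral.integral_of_le zero_le_one, ← integral_Icc_eq_integral_Ioc,
    ← integral_indicator measurableSet_Icc]
  refine integral_congr_ae (.of_forall fun t => ?_)
  by_cases ht : t ∈ Icc (0 : ℝ) 1
  · have hρ : ρ (-t) = 1 :=
      ρ.one_of_mem_closedBall (by simpa [abs_le] using ⟨by linarith [ht.1], ht.2⟩)
    simp [ht, hρ]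
  · simp [ht]

theorem contDiff_uncurry_fderiv {m n : WithTop ℕ∞} (hf : ContDiff ℝ n (uncurry f))
    (hmn : m + 1 ≤ n) : ContDiff ℝ m (uncurry fun x t => fderiv ℝ (f · t) x) :=
  (hf.comp (contDiff_snd.prodMk (contDiff_snd.comp contDiff_fst)) :
    ContDiff ℝ n (uncurry fun (p : E × ℝ) y => f y p.2)).fderiv contDiff_fst hmn

theorem hasFDerivAt_integral_zero_one [ProperSpace E] (hf : ContDiff ℝ 1 (uncurry f)) (x : E) :
    HasFDerivAt (fun x => ∫ t in (0 : ℝ)..1, f x t) (∫ t in (0 : ℝ)..1, fderiv ℝ (f · t) x) x := by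
  have hft : ∀ t, ContDiff ℝ 1 (f · t) := fun t => hf.comp (contDiff_id.prodMk contDiff_const)
  have hf' := (contDiff_uncurry_fderiv (m := 0) hf (by norm_num)).continuous
  obtain ⟨C, hC⟩ := ((isCompact_closedBall x 1).prod (isCompact_Icc (a := (0 : ℝ)) (b := 1))
    ).exists_bound_of_continuousOn hf'.continuousOn
  refine intervalIntegral.hasFDerivAt_integral_of_dominated_of_fderiv_le (bound := fun _ => C)
    (Metric.closedBall_mem_nhds x one_pos) (.of_forall fun y => ?_) ?_ ?_
    (.of_forall fun t ht y hy => ?_) intervalIntegrable_const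
    (.of_forall fun t _ y _ => ((hft t).differentiable one_ne_zero y).hasFDerivAt)
  · exact (hf.continuous.comp (.prodMk_right y)).aestronglyMeasurable
  · exact (hf.continuous.comp (.prodMk_right x)).intervalIntegrable _ _
  · exact (hf'.comp (.prodMk_right x)).aestronglyMeasurable
  · rw [uIoc_of_le zero_le_one] at ht
    exact hC (y, t) ⟨hy, ht.1.le, ht.2⟩

theorem exists_contDiff_smul_eq_add_smul [CompleteSpace F] {U : E → F} (hU : ContDiff ℝ ∞ U) :
    ∃ Φ : E → ℝ → F, ContDiff ℝ ∞ (uncurry Φ) ∧ ∀ x t, U (t • x) = U 0 + t • Φ x t := by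
  have hU' : ContDiff ℝ ∞ (fderiv ℝ U) := hU.fderiv_right (by simp)
  refine ⟨fun x t => ∫ θ in (0 : ℝ)..1, fderiv ℝ U ((θ * t) • x) x,
    contDiff_integral_zero_one (f := fun (p : E × ℝ) θ => fderiv ℝ U ((θ * p.2) • p.1) p.1) ?_,
    fun x t => ?_⟩
  · exact (hU'.comp ((contDiff_snd.mul contDiff_fst.snd).smul contDiff_fst.fst)).clm_apply
      contDiff_fst.fst
  · have hderiv : ∀ θ ∈ uIcc (0 : ℝ) 1,
        HasDerivAt (fun s : ℝ => U ((s * t) • x)) (t • fderiv ℝ U ((θ * t) • x) x) θ := by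
      intro θ _
      have h := (hU.differentiable (by simp) ((θ * t) • x)).hasFDerivAt.comp_hasDerivAt θ
        (((hasDerivAt_id θ).mul_const t).smul_const x)
      simpa [Function.comp_def] using h
    have hcont : Continuous fun θ : ℝ => t • fderiv ℝ U ((θ * t) • x) x :=
      ((hU'.continuous.comp (by fun_prop)).clm_apply continuous_const).const_smul t
    have h := intervalIntegral.integral_eq_sub_of_hasDerivAt hderiv (hcont.intervalIntegrable _ _)
    rw [intervalIntegral.integral_smul] at h
    simp [h]

end ParametricIntegral

theorem pd_integral_zero_one {f : ℝ³ → ℝ → ℝ} (hf : ContDiff ℝ 1 (uncurry f)) (x : ℝ³) (i : Fin 3) :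
    pd i (fun x => ∫ t in (0 : ℝ)..1, f x t) x = ∫ t in (0 : ℝ)..1, pd i (f · t) x := by
  have hf' := (contDiff_uncurry_fderiv (m := 0) hf (by norm_num)).continuous
  rw [pd, (hasFDerivAt_integral_zero_one hf x).fderiv, ContinuousLinearMap.intervalIntegral_apply]
  · rfl
  · exact (hf'.comp (.prodMk_right x)).intervalIntegrable _ _

theorem contDiff_uncurry_pd {f : ℝ³ → ℝ → ℝ} {m n : WithTop ℕ∞} (hf : ContDiff ℝ n (uncurry f))
    (hmn : m + 1 ≤ n) (i : Fin 3) : ContDiff ℝ m (uncurry fun x t => pd i (f · t) x) :=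
  (contDiff_uncurry_fderiv hf hmn).clm_apply contDiff_const

/-- The partial derivative of `f` along the projection of the `i`-th basis vector to `xᗮ`, for `x`
on the unit sphere; the spherical Laplacian is the sum of the squares of these operators. -/
noncomputable def tangentialPd (i : Fin 3) (f : ℝ³ → ℝ) : ℝ³ → ℝ := fun x =>
  pd i f x - x i * ∑ j, x j * pd j f x

section SphericalLaplacian

variable {f : ℝ³ → ℝ} {x y : ℝ³}

theorem contDiff_tangentialPd {m n : WithTop ℕ∞} (hf : ContDiff ℝ n f) (hmn : m + 1 ≤ n)
    (i : Fin 3) : ContDiff ℝ m (tangentialPd i f) :=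
  have hpd := contDiff_pd hf hmn
  (hpd i).sub (.mul (by fun_prop) (ContDiff.sum fun j _ => .mul (by fun_prop) (hpd j)))

theorem sum_mul_tangentialPd (hy : ‖y‖ = 1) : ∑ i, y i * tangentialPd i f y = 0 := by
  simp only [tangentialPd, mul_sub, Finset.sum_sub_distrib, ← mul_assoc, ← Finset.sum_mul,
    sum_coord_sq, hy]
  ring

theorem contDiffAt_normalize {n : WithTop ℕ∞} (hx : x ≠ 0) :
    ContDiffAt ℝ n (fun y : ℝ³ => ‖y‖⁻¹ • y) x :=
  ((contDiffAt_norm ℝ hx).inv (norm_ne_zero_iff.2 hx)).smul contDiffAt_id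

theorem pd_comp_normalize (hf : Differentiable ℝ f) (hx : x ≠ 0) (i : Fin 3) :
    pd i (fun y => f (‖y‖⁻¹ • y)) x = ‖x‖⁻¹ * tangentialPd i f (‖x‖⁻¹ • x) := by
  have hν : DifferentiableAt ℝ (fun y : ℝ³ => ‖y‖⁻¹ • y) x :=
    (contDiffAt_normalize hx).differentiableAt one_ne_zero
  have hν' : fderiv ℝ (fun y : ℝ³ => ‖y‖⁻¹ • y) x (EuclideanSpace.single i 1) =
      ‖x‖⁻¹ • EuclideanSpace.single i 1 - (‖x‖⁻¹ ^ 3 * x i) • x := by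
    have hinv : DifferentiableAt ℝ (fun y : ℝ³ => ‖y‖⁻¹) x :=
      (differentiableAt_id.norm ℝ hx).inv (norm_ne_zero_iff.2 hx)
    have hpd : fderiv ℝ (fun y : ℝ³ => ‖y‖⁻¹) x (EuclideanSpace.single i 1) =
        -(‖x‖⁻¹ ^ 3 * x i) := by
      simpa [pd, zpow_neg, show (-1 - 2 : ℤ) = -3 by norm_num, zpow_ofNat]
        using pd_norm_zpow hx (-1) i
    rw [fderiv_fun_smul (f := fun y => y) hinv differentiableAt_id]
    simp [hpd, sub_eq_add_neg]
  have hchain := ((hf _).hasFDerivAt.comp x hν.hasFDerivAt).fderiv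
  rw [tangentialPd, sum_mul_pd, pd, ← Function.comp_def f, hchain,
    ContinuousLinearMap.comp_apply, hν', map_sub, map_smul, map_smul, map_smul, pd]
  simp only [smul_eq_mul, PiLp.smul_apply]
  ring

theorem lap_comp_normalize (hf : ContDiff ℝ 2 f) (hy : ‖y‖ = 1) :
    lap (fun x => f (‖x‖⁻¹ • x)) y = ∑ i, tangentialPd i (tangentialPd i f) y := by
  have hy0 : y ≠ 0 := norm_ne_zero_iff.1 (by simp [hy])
  have hT := fun i => contDiff_tangentialPd (m := 1) hf (by norm_num) i
  have h : ∀ i, pd i (pd i fun x => f (‖x‖⁻¹ • x)) y =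
      tangentialPd i (tangentialPd i f) y - y i * tangentialPd i f y := by
    intro i
    have h₁ : (pd i fun x => f (‖x‖⁻¹ • x)) =ᶠ[𝓝 y]
        fun x => ‖x‖ ^ (-1 : ℤ) * tangentialPd i f (‖x‖⁻¹ • x) :=
      eventually_nhds_of_ne_zero (fun x hx => by
        simp only [pd_comp_normalize (hf.differentiable two_ne_zero) hx, zpow_neg_one]) hy0
    have hTν : DifferentiableAt ℝ (fun x => tangentialPd i f (‖x‖⁻¹ • x)) y :=
      ((hT i).contDiffAt.comp y (contDiffAt_normalize hy0)).differentiableAt one_ne_zero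
    rw [(pd_congr h₁ i).self_of_nhds,
      pd_mul ((contDiffAt_norm_zpow (n := 1) hy0 _).differentiableAt one_ne_zero) hTν,
      pd_comp_normalize ((hT i).differentiable one_ne_zero) hy0, pd_norm_zpow hy0]
    simp only [hy, Int.reduceNeg, zpow_neg, zpow_ofNat, one_pow, inv_one, one_smul, one_mul,
      Int.cast_neg, Int.cast_one, Int.reduceSub, mul_one, neg_mul, mul_neg]
    ring
  rw [lap, Finset.sum_congr rfl fun i _ => h i, Finset.sum_sub_distrib, sum_mul_tangentialPd hy,
    sub_zero]

theorem sum_tangentialPd_tangentialPd (hf : ContDiff ℝ 2 f) (hy : ‖y‖ = 1) :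
    ∑ i, tangentialPd i (tangentialPd i f) y =
      lap f y - ∑ i, ∑ j, y i * (y j * pd i (pd j f) y) - 2 * ∑ i, y i * pd i f y := by
  have hpd := fun j => differentiableAt_pd (hf.contDiffAt (x := y)) j
  have hcoord := fun j : Fin 3 => (by fun_prop : DifferentiableAt ℝ (fun z : ℝ³ => z j) y)
  have hE : DifferentiableAt ℝ (fun z => ∑ j, z j * pd j f z) y :=
    DifferentiableAt.fun_sum fun j _ => (hcoord j).fun_mul (hpd j)
  have h : ∀ i k, pd k (tangentialPd i f) y = pd k (pd i f) y -
      (y i * pd k (fun z => ∑ j, z j * pd j f z) y +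
        (if k = i then 1 else 0) * ∑ j, y j * pd j f y) := by
    intro i k
    have hsub : tangentialPd i f =
        fun z => pd i f z + (-1) * (z i * ∑ j, z j * pd j f z) := by
      ext z
      rw [tangentialPd]
      ring
    rw [hsub, pd_add (hpd i) (((hcoord i).fun_mul hE).const_mul _),
      pd_const_mul _ ((hcoord i).fun_mul hE), pd_mul (hcoord i) hE, pd_coord]
    ring
  have hy2 : y 0 * y 0 + y 1 * y 1 + y 2 * y 2 = 1 := by
    simpa [Fin.sum_univ_three, hy] using sum_coord_sq (x := y)
  generalize hEy : (fun z => ∑ j, z j * pd j f z) = e at h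
  have hEy' : ∑ j, y j * pd j f y = e y := by rw [← hEy]
  have hT : ∀ i, tangentialPd i (tangentialPd i f) y =
      pd i (tangentialPd i f) y - y i * ∑ k, y k * pd k (tangentialPd i f) y := fun i => rfl
  simp only [hT, h, lap, hEy']
  simp only [↓reduceIte, one_mul, ite_mul, zero_mul, Fin.sum_univ_three, Fin.isValue,
    Finset.sum_sub_distrib, one_ne_zero, add_zero, Fin.reduceEq, zero_ne_one]
  linear_combination (y 0 * pd 0 e y + y 1 * pd 1 e y + y 2 * pd 2 e y + e y) * hy2

theorem tangentialPd_integral_zero_one {f : ℝ³ → ℝ → ℝ} (hf : ContDiff ℝ 1 (uncurry f))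
    (i : Fin 3) : tangentialPd i (fun x => ∫ t in (0 : ℝ)..1, f x t) =
      fun x => ∫ t in (0 : ℝ)..1, tangentialPd i (f · t) x := by
  ext x
  have hpd : ∀ j, Continuous fun t => pd j (f · t) x := fun j =>
    (contDiff_uncurry_pd (m := 0) hf (by norm_num) j).continuous.comp (.prodMk_right x)
  have hsum : Continuous fun t => x i * ∑ j, x j * pd j (f · t) x := by fun_prop
  simp only [tangentialPd, pd_integral_zero_one hf]
  rw [intervalIntegral.integral_sub ((hpd i).intervalIntegrable _ _)
      (hsum.intervalIntegrable _ _), intervalIntegral.integral_const_mul,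
    intervalIntegral.integral_finsetSum fun j _ => ((hpd j).intervalIntegrable _ _).const_mul _]
  simp only [intervalIntegral.integral_const_mul]

theorem contDiff_uncurry_tangentialPd {f : ℝ³ → ℝ → ℝ} {m n : WithTop ℕ∞}
    (hf : ContDiff ℝ n (uncurry f)) (hmn : m + 1 ≤ n) (i : Fin 3) :
    ContDiff ℝ m (uncurry fun x t => tangentialPd i (f · t) x) := by
  have hpd := contDiff_uncurry_pd hf hmn
  have hcoord : ∀ j : Fin 3, ContDiff ℝ m fun p : ℝ³ × ℝ => p.1 j := fun j => by fun_prop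
  exact (hpd i).sub ((hcoord i).mul (ContDiff.sum fun j _ => (hcoord j).mul (hpd j)))

theorem lap_integral_zero_one_comp_normalize {f : ℝ³ → ℝ → ℝ} (hf : ContDiff ℝ 2 (uncurry f))
    (hy : ‖y‖ = 1) :
    lap (fun x => ∫ t in (0 : ℝ)..1, f (‖x‖⁻¹ • x) t) y =
      ∫ t in (0 : ℝ)..1, lap (fun x => f (‖x‖⁻¹ • x) t) y := by
  have hf₁ := fun i => contDiff_uncurry_tangentialPd (m := 1) hf (by norm_num) i
  have hft : ∀ t, ContDiff ℝ 2 (f · t) := fun t => hf.comp (contDiff_id.prodMk contDiff_const)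
  have h_integrable : ∀ i, IntervalIntegrable (fun t => tangentialPd i (tangentialPd i (f · t)) y)
      volume 0 1 := fun i =>
    ((contDiff_uncurry_tangentialPd (m := 0) (hf₁ i) (by norm_num) i).continuous.comp
      (.prodMk_right y)).intervalIntegrable _ _
  simp only [lap_comp_normalize (hft _) hy]
  rw [lap_comp_normalize (f := fun x => ∫ t in (0 : ℝ)..1, f x t)
    (contDiff_integral_zero_one (n := 2) hf) hy,
    intervalIntegral.integral_finsetSum fun i _ => h_integrable i]
  simp only [tangentialPd_integral_zero_one (hf.of_le (by norm_num)),
    tangentialPd_integral_zero_one (hf₁ _)]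

theorem lap_comp_smul_normalize (hf : ContDiff ℝ 2 f) (hy : ‖y‖ = 1) (t : ℝ) :
    lap (fun x => f (t • ‖x‖⁻¹ • x)) y =
      t ^ 2 * lap f (t • y) - t ^ 2 * ∑ i, ∑ j, y i * (y j * pd i (pd j f) (t • y)) -
        2 * t * ∑ i, y i * pd i f (t • y) := by
  have hft : ContDiff ℝ 2 fun x => f (t • x) := hf.comp (contDiff_const_smul t)
  have hpd₂ : ∀ i j, pd i (pd j fun x => f (t • x)) y = t ^ 2 * pd i (pd j f) (t • y) := by
    intro i j
    have hd : DifferentiableAt ℝ (fun x => pd j f (t • x)) y :=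
      ((contDiff_pd (m := 1) hf (by norm_num) j).comp (contDiff_const_smul t)).differentiable
        one_ne_zero y
    rw [show pd j (fun x => f (t • x)) = _ from funext fun x => pd_comp_smul t j,
      pd_const_mul _ hd, pd_comp_smul]
    ring
  rw [lap_comp_normalize (f := fun x => f (t • x)) hft hy, sum_tangentialPd_tangentialPd hft hy]
  simp only [lap, hpd₂, pd_comp_smul, Fin.sum_univ_three]
  ring

theorem hasDerivAt_radial (hf : ContDiff ℝ 2 f) (t : ℝ) :
    HasDerivAt (fun s : ℝ => (1 - s) * s * ∑ i, y i * pd i f (s • y) + f (s • y))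
      ((1 - t) * (t * ∑ i, ∑ j, y i * (y j * pd i (pd j f) (t • y)) +
        2 * ∑ i, y i * pd i f (t • y))) t := by
  have hpd : HasDerivAt (fun s : ℝ => ∑ j, y j * pd j f (s • y))
      (∑ i, ∑ j, y i * (y j * pd i (pd j f) (t • y))) t := by
    rw [Finset.sum_comm]
    refine HasDerivAt.fun_sum fun j _ => ?_
    simp only [mul_left_comm _ (y j), ← Finset.mul_sum]
    exact (hasDerivAt_comp_smul (differentiableAt_pd hf.contDiffAt j)).const_mul _
  have hquad : HasDerivAt (fun s : ℝ => (1 - s) * s) (1 - 2 * t) t :=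
    (((hasDerivAt_id t).const_sub 1).mul (hasDerivAt_id t)).congr_deriv (by simp; ring)
  refine ((hquad.mul hpd).add
    (hasDerivAt_comp_smul (hf.differentiable two_ne_zero (t • y)))).congr_deriv ?_
  ring

theorem isSmoothHom_comp_normalize (hf : ContDiff ℝ ∞ f) :
    IsSmoothHom 0 fun x => f (‖x‖⁻¹ • x) where
  contDiffOn x hx := (hf.contDiffAt.comp x (contDiffAt_normalize hx)).contDiffWithinAt
  map_smul t ht x _ := by
    rw [norm_smul, Real.norm_of_nonneg ht.le, smul_smul, mul_inv_rev, inv_mul_cancel_right₀ ht.ne',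
      zpow_zero, one_mul]

/-- The function is `u x = ∫₀¹ (1 - t) / t * (U (t • x / ‖x‖) - U 0) dt`; with this weight the
radial part of the Laplacian is an exact derivative in `t`. -/
theorem exists_isSmoothHom_lap_eq_integral {U : ℝ³ → ℝ} (hU : ContDiff ℝ ∞ U) :
    ∃ u, IsSmoothHom 0 u ∧ ∀ y, ‖y‖ = 1 →
      lap u y = (∫ t in (0 : ℝ)..1, (1 - t) * t * lap U (t • y)) - (U y - U 0) := by
  obtain ⟨Φ, hΦ, hUΦ⟩ := exists_contDiff_smul_eq_add_smul hU
  have hf : ContDiff ℝ ∞ (uncurry fun x t => (1 - t) * Φ x t) :=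
    (contDiff_const.sub contDiff_snd).mul hΦ
  have hU₂ : ContDiff ℝ 2 U := hU.of_le (WithTop.coe_le_coe.2 le_top)
  refine ⟨fun x => ∫ t in (0 : ℝ)..1, (1 - t) * Φ (‖x‖⁻¹ • x) t,
    isSmoothHom_comp_normalize (contDiff_integral_zero_one hf), fun y hy => ?_⟩
  have hradial : Continuous fun t : ℝ => (1 - t) *
      (t * ∑ i, ∑ j, y i * (y j * pd i (pd j U) (t • y)) + 2 * ∑ i, y i * pd i U (t • y)) := by
    have h₁ := fun i => contDiff_pd (m := 1) hU₂ (by norm_num) i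
    have h₂ := fun i j => (contDiff_pd (m := 0) (h₁ j) (by norm_num) i).continuous
    have h₁ := fun i => (h₁ i).continuous
    fun_prop
  have hlap : Continuous fun t : ℝ => (1 - t) * t * lap U (t • y) := by
    have h := (contDiff_lap (m := 0) hU₂ (by norm_num)).continuous
    fun_prop
  have hboundary := intervalIntegral.integral_eq_sub_of_hasDerivAt
    (fun t _ => hasDerivAt_radial (y := y) hU₂ t) (hradial.intervalIntegrable 0 1)
  simp only [sub_self, zero_mul, mul_zero, one_smul, zero_smul, zero_add] at hboundary
  rw [lap_integral_zero_one_comp_normalize (f := fun x t => (1 - t) * Φ x t)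
    (hf.of_le (WithTop.coe_le_coe.2 le_top)) hy, ← hboundary, ← intervalIntegral.integral_sub
    (hlap.intervalIntegrable _ _) (hradial.intervalIntegrable _ _)]
  refine intervalIntegral.integral_congr_ae (.of_forall fun t ht => ?_)
  have ht : 0 < t := (uIoc_of_le (zero_le_one' ℝ) ▸ ht).1
  have hquot : (fun x => (1 - t) * Φ (‖x‖⁻¹ • x) t) =
      fun x => (1 - t) / t * (U (t • ‖x‖⁻¹ • x) + -U 0) := by
    ext x
    rw [hUΦ, smul_eq_mul]
    field_simp
    ring
  have hy0 : y ≠ 0 := norm_ne_zero_iff.1 (by simp [hy])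
  have hUν : ContDiffAt ℝ 2 (fun x => U (t • ‖x‖⁻¹ • x)) y :=
    (hU₂.comp (contDiff_const_smul t)).contDiffAt.comp y (contDiffAt_normalize hy0)
  rw [hquot, lap_const_mul _ (hUν.add contDiffAt_const), lap_add hUν contDiffAt_const, lap_const,
    lap_comp_smul_normalize hU₂ hy]
  field_simp
  ring

end SphericalLaplacian

section DirichletProblem

theorem contDiff_of_forall_mem_tsupport {E F : Type*} [NormedAddCommGroup E] [NormedSpace ℝ E]
    [NormedAddCommGroup F] [NormedSpace ℝ F] {f : E → F} {n : WithTop ℕ∞}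
    (hf : ∀ x ∈ tsupport f, ContDiffAt ℝ n f x) : ContDiff ℝ n f :=
  contDiff_iff_contDiffAt.2 fun x => by
    by_cases hx : x ∈ tsupport f
    · exact hf x hx
    · exact contDiffAt_const.congr_of_eventuallyEq (notMem_tsupport_iff_eventuallyEq.1 hx)

variable {G K : ℝ³ → ℝ}

theorem newtonPotential_sub (hG : Continuous G) (hGc : HasCompactSupport G) (hK : Continuous K)
    (hKc : HasCompactSupport K) (x : ℝ³) :
    newtonPotential (fun y => G y - K y) x = newtonPotential G x - newtonPotential K x := by
  simp only [newtonPotential, mul_sub]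
  exact integral_sub
    (hGc.convolutionExists_right (.mul ℝ ℝ) locallyIntegrable_inv_norm hG x)
    (hKc.convolutionExists_right (.mul ℝ ℝ) locallyIntegrable_inv_norm hK x)

theorem kelvinSource_eq_zero (hG : tsupport G ⊆ Metric.ball 0 1) {y : ℝ³} (hy : ‖y‖ ≤ 1) :
    kelvinSource G y = 0 := by
  rcases eq_or_ne y 0 with rfl | hy0
  · simp [kelvinSource]
  · have h_inv : 1 ≤ dist (EuclideanGeometry.inversion 0 1 y) 0 := by
      rw [EuclideanGeometry.dist_inversion_center, dist_zero_right, one_pow]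
      exact (one_le_div (norm_pos_iff.2 hy0)).2 hy
    rw [kelvinSource, image_eq_zero_of_notMem_tsupport fun h => h_inv.not_gt (hG h), mul_zero]

theorem contDiff_kelvinSource (hG : ContDiff ℝ ∞ G) (hG₁ : tsupport G ⊆ Metric.ball 0 1) :
    ContDiff ℝ ∞ (kelvinSource G) := by
  refine contDiff_of_forall_mem_tsupport fun y hy => ?_
  have hy1 : 1 ≤ ‖y‖ := by
    refine closure_minimal (fun z hz => ?_) (isClosed_le continuous_const continuous_norm) hy
    by_contra h
    exact hz (kelvinSource_eq_zero hG₁ (not_le.1 h).le)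
  have hy0 : y ≠ 0 := norm_pos_iff.1 (one_pos.trans_le hy1)
  have hnorm : ContDiffAt ℝ ∞ (fun z : ℝ³ => (‖z‖ ^ 5)⁻¹) y :=
    ((contDiffAt_norm ℝ hy0).pow 5).inv (pow_ne_zero _ (norm_ne_zero_iff.2 hy0))
  exact hnorm.mul (hG.contDiffAt.comp y
    (contDiffAt_const.inversion contDiffAt_const contDiffAt_id hy0))

theorem hasCompactSupport_kelvinSource (hG : 0 ∉ tsupport G) :
    HasCompactSupport (kelvinSource G) := by
  obtain ⟨ε, hε, hball⟩ := Metric.eventually_nhds_iff.1 (notMem_tsupport_iff_eventuallyEq.1 hG)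
  refine .intro (isCompact_closedBall 0 ε⁻¹) fun y hy => ?_
  have hy : ε⁻¹ < ‖y‖ := by simpa using hy
  rw [kelvinSource, hball, Pi.zero_apply, mul_zero]
  rw [EuclideanGeometry.dist_inversion_center, dist_zero_right, one_pow, one_div]
  exact inv_lt_of_inv_lt₀ hε hy

theorem exists_lap_eq_of_tsupport_subset (hG : ContDiff ℝ ∞ G) (hG₀ : 0 ∉ tsupport G)
    (hG₁ : tsupport G ⊆ Metric.ball 0 1) :
    ∃ U, ContDiff ℝ ∞ U ∧ (∀ x, ‖x‖ = 1 → U x = 0) ∧ ∀ x, ‖x‖ ≤ 1 → lap U x = G x := by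
  have hGc : HasCompactSupport G :=
    (isCompact_closedBall 0 1).of_isClosed_subset (isClosed_tsupport G)
      (hG₁.trans Metric.ball_subset_closedBall)
  have hK := contDiff_kelvinSource hG hG₁
  have hKc := hasCompactSupport_kelvinSource hG₀
  have hH := hG.sub hK
  have hHc : HasCompactSupport fun y => G y - kelvinSource G y := hGc.sub hKc
  have hN := contDiff_newtonPotential hH hHc
  refine ⟨fun x => -(4 * Real.pi)⁻¹ * newtonPotential (fun y => G y - kelvinSource G y) x,
    contDiff_const.mul hN, fun x hx => ?_, fun x hx => ?_⟩
  · have hsub := newtonPotential_sub hG.continuous hGc hK.continuous hKc x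
    rw [newtonPotential_kelvinSource hx, sub_self] at hsub
    simp only [hsub, mul_zero]
  · rw [lap_const_mul _ (hN.contDiffAt.of_le (WithTop.coe_le_coe.2 le_top)),
      lap_newtonPotential (hH.of_le (WithTop.coe_le_coe.2 le_top)) hHc,
      kelvinSource_eq_zero hG₁ hx]
    field_simp
    ring

end DirichletProblem

theorem IsSmoothHom.eq_of_forall_norm_eq_one {k : ℤ} {f g : ℝ³ → ℝ} (hf : IsSmoothHom k f)
    (hg : IsSmoothHom k g) (h : ∀ y, ‖y‖ = 1 → f y = g y) {x : ℝ³} (hx : x ≠ 0) : f x = g x := by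
  have hx' : 0 < ‖x‖ := norm_pos_iff.2 hx
  have hy : ‖‖x‖⁻¹ • x‖ = 1 := by rw [norm_smul, norm_inv, norm_norm, inv_mul_cancel₀ hx'.ne']
  have hy0 : ‖x‖⁻¹ • x ≠ 0 := norm_ne_zero_iff.1 (by simp [hy])
  rw [← smul_inv_smul₀ hx'.ne' x, hf.map_smul _ hx' _ hy0, hg.map_smul _ hx' _ hy0, h _ hy]

theorem exists_isSmoothHom_lap_eq_mul {p : ℝ³ → ℝ} (hp : IsSmoothHom 0 p) :
    ∃ u, ∃ c b : ℝ, c ≠ 0 ∧ IsSmoothHom 0 u ∧ ∀ y, ‖y‖ = 1 → lap u y = c * p y + b := by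
  let ψ : ContDiffBump (3 / 8 : ℝ) := ⟨1 / 16, 1 / 8, by norm_num, by norm_num⟩
  have hsupp : tsupport (fun x : ℝ³ => ψ ‖x‖ * p x) ⊆ {x | 1 / 4 ≤ ‖x‖ ∧ ‖x‖ ≤ 1 / 2} := by
    refine closure_minimal (fun x hx => ?_) ((isClosed_le continuous_const continuous_norm).inter
      (isClosed_le continuous_norm continuous_const))
    have h : ‖x‖ ∈ Metric.ball (3 / 8) (1 / 8) := ψ.support_eq ▸ left_ne_zero_of_mul hx
    rw [Real.ball_eq_Ioo] at h
    constructor <;> linarith [h.1, h.2]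
  have hG : ContDiff ℝ ∞ fun x : ℝ³ => ψ ‖x‖ * p x := by
    refine contDiff_of_forall_mem_tsupport fun x hx => ?_
    have hx0 : x ≠ 0 := norm_pos_iff.1 (by linarith [(hsupp hx).1])
    exact (ψ.contDiffAt.comp x (contDiffAt_norm ℝ hx0)).mul (hp.contDiffAt hx0)
  obtain ⟨U, hU, hU₁, hlapU⟩ := exists_lap_eq_of_tsupport_subset hG
    (fun h => by simpa using (hsupp h).1.trans_lt' (by norm_num : (0 : ℝ) < 1 / 4))
    (fun x hx => by simpa using (hsupp hx).2.trans_lt (by norm_num : (1 / 2 : ℝ) < 1))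
  obtain ⟨u, hu, hlapu⟩ := exists_isSmoothHom_lap_eq_integral hU
  have hc : 0 < ∫ t in (0 : ℝ)..1, (1 - t) * t * ψ t := by
    refine intervalIntegral.integral_pos one_pos
      ((by fun_prop : Continuous fun t : ℝ => (1 - t) * t).mul ψ.continuous).continuousOn
      (fun t ht => mul_nonneg (mul_nonneg (by linarith [ht.2]) ht.1.le) ψ.nonneg)
      ⟨3 / 8, by norm_num, mul_pos (by norm_num) (ψ.pos_of_mem_ball (by simp [ψ.rOut_pos]))⟩
  refine ⟨u, _, U 0, hc.ne', hu, fun y hy => ?_⟩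
  rw [hlapu y hy, hU₁ y hy, zero_sub, sub_neg_eq_add, ← intervalIntegral.integral_mul_const]
  congr 1
  refine intervalIntegral.integral_congr_ae (.of_forall fun t ht => ?_)
  rw [uIoc_of_le zero_le_one] at ht
  have hnorm : ‖t • y‖ = t := by rw [norm_smul, hy, mul_one, Real.norm_of_nonneg ht.1.le]
  have hy0 : y ≠ 0 := norm_ne_zero_iff.1 (by simp [hy])
  rw [hlapU _ (hnorm.trans_le ht.2), hnorm, hp.map_smul t ht.1 y hy0, zpow_zero]
  ring

theorem solvableModHarmonics_zero : SolvableModHarmonics 0 := by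
  intro f hf
  have hp : IsSmoothHom 0 fun x => ‖x‖ ^ (2 : ℤ) * f x := hf.norm_sq_mul
  obtain ⟨u, c, b, hc, hu, hlap⟩ := exists_isSmoothHom_lap_eq_mul hp
  have hb : IsSmoothHom (0 - 2) fun x => ‖x‖ ^ (-2 : ℤ) * (c⁻¹ * b) := by
    simpa using (IsSmoothHom.norm_zpow (-2)).mul (.const (c⁻¹ * b))
  refine ⟨fun x => c⁻¹ * u x, fun _ => c⁻¹ * b, hu.const_mul _, .const _,
    fun x _ => lap_const _, fun x hx => ?_⟩
  refine (hu.const_mul c⁻¹).lap.eq_of_forall_norm_eq_one (hf.add hb) (fun y hy => ?_) hx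
  have hy0 : y ≠ 0 := norm_ne_zero_iff.1 (by simp [hy])
  rw [lap_const_mul _ (hu.contDiffAt_two hy0), hlap y hy, hy]
  field_simp

theorem solvableModHarmonics (k : ℤ) : SolvableModHarmonics k :=
  solvableModHarmonics_zero.of_zero k

theorem pd_log_norm_pow {x : ℝ³} (hx : x ≠ 0) (l : ℕ) (i : Fin 3) :
    pd i (fun y => Real.log ‖y‖ ^ l) x =
      l * (Real.log ‖x‖ ^ (l - 1) * (‖x‖ ^ (-2 : ℤ) * x i)) := by
  have hx' : ‖x‖ ≠ 0 := norm_ne_zero_iff.2 hx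
  rw [pd_scomp (f := norm) (φ := fun r => Real.log r ^ l) ((Real.hasDerivAt_log hx').pow l)
    (differentiableAt_id.norm ℝ hx), pd_norm hx, zpow_neg, zpow_ofNat]
  field_simp

theorem contDiffAt_log_norm_pow {x : ℝ³} (hx : x ≠ 0) (l : ℕ) {n : WithTop ℕ∞} :
    ContDiffAt ℝ n (fun y : ℝ³ => Real.log ‖y‖ ^ l) x :=
  ((contDiffAt_norm ℝ hx).log (norm_ne_zero_iff.2 hx)).pow l

theorem lap_log_norm_pow {x : ℝ³} (hx : x ≠ 0) (l : ℕ) :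
    lap (fun y => Real.log ‖y‖ ^ l) x =
      l * (Real.log ‖x‖ ^ (l - 1) * ‖x‖ ^ (-2 : ℤ)) +
      l * ((l - 1 : ℕ) * (Real.log ‖x‖ ^ (l - 1 - 1) * ‖x‖ ^ (-2 : ℤ))) := by
  have hx' : ‖x‖ ≠ 0 := norm_ne_zero_iff.2 hx
  have hlog := (contDiffAt_log_norm_pow (n := 1) hx (l - 1)).differentiableAt one_ne_zero
  have hr := (contDiffAt_norm_zpow (n := 1) hx (-2)).differentiableAt one_ne_zero
  have h : ∀ i, pd i (pd i fun y => Real.log ‖y‖ ^ l) x =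
      l * (Real.log ‖x‖ ^ (l - 1) * ‖x‖ ^ (-2 : ℤ)) + l * ‖x‖ ^ (-4 : ℤ) *
        ((l - 1 : ℕ) * Real.log ‖x‖ ^ (l - 1 - 1) - 2 * Real.log ‖x‖ ^ (l - 1)) * (x i * x i) := by
    intro i
    have hxi : DifferentiableAt ℝ (fun y : ℝ³ => y i) x := by fun_prop
    rw [(pd_congr (eventually_nhds_of_ne_zero (fun y hy => pd_log_norm_pow hy l i) hx)
      i).self_of_nhds, pd_const_mul _ (hlog.fun_mul (hr.fun_mul hxi)),
      pd_mul hlog (hr.fun_mul hxi), pd_mul hr hxi, pd_norm_zpow hx, pd_log_norm_pow hx, pd_coord]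
    simp only [zpow_neg, zpow_ofNat, show (-2 - 2 : ℤ) = -4 by norm_num, if_true]
    field_simp
    push_cast
    ring
  simp only [lap, h, Finset.sum_add_distrib, ← Finset.mul_sum, sum_coord_sq, Finset.sum_const,
    Finset.card_univ, Fintype.card_fin, nsmul_eq_mul, zpow_neg, zpow_ofNat]
  field_simp
  push_cast
  ring

theorem IsSmoothHom.lap_log_norm_pow_mul {k : ℤ} {f : ℝ³ → ℝ} {x : ℝ³} (hf : IsSmoothHom k f)
    (l : ℕ) (hx : x ≠ 0) :
    _root_.lap (fun y => Real.log ‖y‖ ^ l * f y) x =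
      Real.log ‖x‖ ^ l * _root_.lap f x +
      l * (Real.log ‖x‖ ^ (l - 1) * ((2 * k + 1) * (‖x‖ ^ (-2 : ℤ) * f x))) +
      l * ((l - 1 : ℕ) * (Real.log ‖x‖ ^ (l - 1 - 1) * (‖x‖ ^ (-2 : ℤ) * f x))) := by
  have h_euler : ∑ i, _root_.pd i (fun y => Real.log ‖y‖ ^ l) x * _root_.pd i f x =
      l * Real.log ‖x‖ ^ (l - 1) * ‖x‖ ^ (-2 : ℤ) * (k * f x) := by
    rw [← hf.euler hx, Finset.mul_sum]
    exact Finset.sum_congr rfl fun i _ => by rw [pd_log_norm_pow hx]; ring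
  rw [lap_mul (contDiffAt_log_norm_pow hx l) (hf.contDiffAt_two hx), h_euler, lap_log_norm_pow hx]
  ring

/-- Polynomials of degree `< n` in `log ‖x‖` whose coefficients are smooth and homogeneous of
degree `k` on `ℝ³ ∖ {0}`. -/
def IsLogHom (k : ℤ) (n : ℕ) (f : ℝ³ → ℝ) : Prop :=
  ∃ c : ℕ → ℝ³ → ℝ, (∀ l, IsSmoothHom k (c l)) ∧
    ∀ x, x ≠ 0 → f x = ∑ l ∈ Finset.range n, Real.log ‖x‖ ^ l * c l x

namespace IsLogHom

variable {k : ℤ} {m n : ℕ} {f g : ℝ³ → ℝ} {x : ℝ³}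

theorem contDiffAt (hf : IsLogHom k n f) (hx : x ≠ 0) {r : ℕ∞} : ContDiffAt ℝ r f x := by
  obtain ⟨c, hc, hfc⟩ := hf
  exact (ContDiffAt.sum fun l _ => (contDiffAt_log_norm_pow hx l).mul
    ((hc l).contDiffAt hx)).congr_of_eventuallyEq (eventually_nhds_of_ne_zero hfc hx)

theorem contDiffAt_two (hf : IsLogHom k n f) (hx : x ≠ 0) : ContDiffAt ℝ 2 f x :=
  hf.contDiffAt hx (r := 2)

theorem congr (hf : IsLogHom k n f) (h : ∀ x, x ≠ 0 → g x = f x) : IsLogHom k n g := by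
  obtain ⟨c, hc, hfc⟩ := hf
  exact ⟨c, hc, fun x hx => by rw [h x hx, hfc x hx]⟩

theorem zero (k : ℤ) (n : ℕ) : IsLogHom k n fun _ => 0 :=
  ⟨fun _ _ => 0, fun _ => .zero k, by simp⟩

theorem add (hf : IsLogHom k n f) (hg : IsLogHom k n g) : IsLogHom k n fun x => f x + g x := by
  obtain ⟨c, hc, hfc⟩ := hf
  obtain ⟨d, hd, hgd⟩ := hg
  refine ⟨fun l x => c l x + d l x, fun l => (hc l).add (hd l), fun x hx => ?_⟩
  simp only [hfc x hx, hgd x hx, mul_add, Finset.sum_add_distrib]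

theorem const_mul (a : ℝ) (hf : IsLogHom k n f) : IsLogHom k n fun x => a * f x := by
  obtain ⟨c, hc, hfc⟩ := hf
  refine ⟨fun l x => a * c l x, fun l => (hc l).const_mul a, fun x hx => ?_⟩
  simp only [hfc x hx, Finset.mul_sum, mul_left_comm]

theorem sum {ι : Type*} (s : Finset ι) {F : ι → ℝ³ → ℝ} (hF : ∀ i ∈ s, IsLogHom k n (F i)) :
    IsLogHom k n fun x => ∑ i ∈ s, F i x := by
  classical
  induction s using Finset.induction_on with
  | empty => simpa using zero k n
  | insert a s ha ih =>
    simp only [Finset.sum_insert ha]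
    exact (hF a (by simp)).add (ih fun i hi => hF i (by simp [hi]))

theorem log_pow_mul {c : ℝ³ → ℝ} (hc : IsSmoothHom k c) {l : ℕ} (hl : l < n) :
    IsLogHom k n fun x => Real.log ‖x‖ ^ l * c x := by
  refine ⟨fun j x => if j = l then c x else 0, fun j => ?_, fun x _ => by simp [hl]⟩
  rcases eq_or_ne j l with rfl | h
  · simpa using hc
  · simpa [h] using .zero k

theorem natCast_mul_log_pow_mul {c : ℝ³ → ℝ} (hc : IsSmoothHom k c) {l : ℕ} (hl : l ≤ n) :
    IsLogHom k n fun x => l * (Real.log ‖x‖ ^ (l - 1) * c x) := by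
  rcases l with _ | l
  · simpa using zero k n
  · exact (log_pow_mul hc (by omega)).const_mul _

theorem mono (hf : IsLogHom k m f) (hmn : m ≤ n) : IsLogHom k n f := by
  obtain ⟨c, hc, hfc⟩ := hf
  exact (sum (Finset.range m) fun l hl =>
    log_pow_mul (hc l) ((Finset.mem_range.1 hl).trans_le hmn)).congr hfc

theorem pd (hf : IsLogHom k n f) (i : Fin 3) : IsLogHom (k - 1) n (pd i f) := by
  obtain ⟨c, hc, hfc⟩ := hf
  have hrc : ∀ l, IsSmoothHom (k - 1) fun x => ‖x‖ ^ (-2 : ℤ) * x i * c l x := fun l => by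
    convert ((IsSmoothHom.norm_zpow (-2)).mul (IsSmoothHom.coord i)).mul (hc l) using 1
    ring
  refine (sum (Finset.range n) fun l hl => (log_pow_mul ((hc l).pd i) (Finset.mem_range.1 hl)).add
    (natCast_mul_log_pow_mul (hrc l) (Finset.mem_range.1 hl).le)).congr fun x hx => ?_
  have hlog := fun l => (contDiffAt_log_norm_pow (n := 1) hx l).differentiableAt one_ne_zero
  have hc' := fun l => (hc l).differentiableAt hx
  rw [(pd_congr (eventually_nhds_of_ne_zero hfc hx) i).self_of_nhds,
    pd_sum _ fun l _ => (hlog l).fun_mul (hc' l)]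
  refine Finset.sum_congr rfl fun l _ => ?_
  rw [pd_mul (hlog l) (hc' l), pd_log_norm_pow hx]
  ring

theorem exists_lap_eq_top_add {c : ℝ³ → ℝ} (hc : IsSmoothHom (k - 2) c) (n : ℕ) :
    ∃ v g, IsLogHom k (n + 2) v ∧ IsLogHom (k - 2) n g ∧
      ∀ x, x ≠ 0 → lap v x = Real.log ‖x‖ ^ n * c x + g x := by
  obtain ⟨w, h, hw, hh, hharm, hlap⟩ := solvableModHarmonics k c hc
  have hk : (2 * (k : ℝ) + 1) ≠ 0 := by exact_mod_cast (by omega : 2 * k + 1 ≠ 0)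
  have hr : ∀ {u}, IsSmoothHom k u → IsSmoothHom (k - 2) fun x => ‖x‖ ^ (-2 : ℤ) * u x :=
    fun hu => by convert (IsSmoothHom.norm_zpow (-2)).mul hu using 1; ring
  obtain ⟨a, ha⟩ : ∃ a : ℝ, a * ((n + 1) * (2 * k + 1)) = -1 :=
    ⟨-(((n : ℝ) + 1) * (2 * k + 1))⁻¹, by field_simp⟩
  have hv₁ : IsLogHom k (n + 2) fun x => Real.log ‖x‖ ^ n * w x := log_pow_mul hw (by omega)
  have hv₂ : IsLogHom k (n + 2) fun x => Real.log ‖x‖ ^ (n + 1) * h x := log_pow_mul hh (by omega)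
  refine ⟨_, _, hv₁.add (hv₂.const_mul a),
    (natCast_mul_log_pow_mul (((hr hw).const_mul (2 * k + 1)).add
      ((hr hh).const_mul (a * (n + 1)))) le_rfl).add
    ((natCast_mul_log_pow_mul (hr hw) (Nat.sub_le n 1)).const_mul n),
    fun x hx => ?_⟩
  rw [lap_add (hv₁.contDiffAt_two hx) ((hv₂.const_mul a).contDiffAt_two hx),
    lap_const_mul _ (hv₂.contDiffAt_two hx), hw.lap_log_norm_pow_mul n hx,
    hh.lap_log_norm_pow_mul (n + 1) hx, hharm x hx, hlap x hx]
  push_cast [Nat.add_sub_cancel]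
  linear_combination Real.log ‖x‖ ^ n * (‖x‖ ^ (-2 : ℤ) * h x) * ha

theorem exists_lap_eq (hf : IsLogHom (k - 2) n f) :
    ∃ u, IsLogHom k (n + 1) u ∧ ∀ x, x ≠ 0 → lap u x = f x := by
  induction n generalizing f with
  | zero =>
    obtain ⟨c, -, hfc⟩ := hf
    exact ⟨_, zero k 1, fun x hx => by simp [hfc x hx, lap_const]⟩
  | succ n ih =>
    obtain ⟨c, hc, hfc⟩ := hf
    obtain ⟨v, g, hv, hg, hlapv⟩ := exists_lap_eq_top_add (hc n) n
    have h_lower : IsLogHom (k - 2) n fun x => ∑ l ∈ Finset.range n, Real.log ‖x‖ ^ l * c l x :=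
      ⟨c, hc, fun _ _ => rfl⟩
    obtain ⟨u, hu, hlapu⟩ := ih (h_lower.add (hg.const_mul (-1)))
    have hu' : IsLogHom k (n + 2) u := hu.mono (by omega)
    refine ⟨_, hv.add hu', fun x hx => ?_⟩
    rw [lap_add (hv.contDiffAt_two hx) (hu'.contDiffAt_two hx), hlapv x hx, hlapu x hx, hfc x hx,
      Finset.sum_range_succ]
    ring

end IsLogHom

theorem pd_eval_congr {V W : ℝ³ → ℝ³} {x : ℝ³} (h : V =ᶠ[𝓝 x] W) (a b : Fin 3) :
    pd a (fun y => V y b) =ᶠ[𝓝 x] pd a fun y => W y b :=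
  pd_congr (h.mono fun y hy => by rw [hy]) a

theorem Ldelta_congr {V W : ℝ³ → ℝ³} {x : ℝ³} (h : V =ᶠ[𝓝 x] W) (a : Fin 3) :
    Ldelta V a x = Ldelta W a x := by
  have hdiv : (fun y => ∑ b, pd b (fun z => V z b) y) =ᶠ[𝓝 x]
      fun y => ∑ b, pd b (fun z => W z b) y := by
    filter_upwards [eventually_all.2 fun b => pd_eval_congr h b b] with y hy
    exact Finset.sum_congr rfl fun b _ => hy b
  simp only [Ldelta, (pd_congr hdiv a).self_of_nhds,
    (pd_congr (pd_eval_congr h _ a) _).self_of_nhds]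

theorem exists_Ldelta_eq {k : ℤ} {n : ℕ} {F : Fin 3 → ℝ³ → ℝ}
    (hF : ∀ a, IsLogHom (k - 2) n (F a)) :
    ∃ V : ℝ³ → ℝ³, (∀ a, IsLogHom k (n + 2) fun x => V x a) ∧
      ∀ x, x ≠ 0 → ∀ a, Ldelta V a x = F a x := by
  choose w hw hlapw using fun a => (hF a).exists_lap_eq
  have hdiv : IsLogHom (k + 1 - 2) (n + 1) fun x => ∑ b, pd b (w b) x := by
    rw [show k + 1 - 2 = k - 1 by ring]
    exact .sum _ fun b _ => (hw b).pd b
  obtain ⟨φ, hφ, hlapφ⟩ := (hdiv.const_mul (-1 / 4)).exists_lap_eq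
  have hdφ : ∀ a, IsLogHom k (n + 2) (pd a φ) := fun a => by simpa using hφ.pd a
  refine ⟨fun x => WithLp.toLp 2 fun a => w a x + pd a φ x,
    fun a => ((hw a).mono (by omega)).add (hdφ a), fun x hx a => ?_⟩
  have hlap_pdφ : lap (pd a φ) x = -1 / 4 * pd a (fun y => ∑ b, pd b (w b) y) x := by
    rw [lap_pd (hφ.contDiffAt hx (r := 3)),
      (pd_congr (eventually_nhds_of_ne_zero hlapφ hx) a).self_of_nhds,
      pd_const_mul _ ((hdiv.contDiffAt_two hx).differentiableAt two_ne_zero)]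
  have hdivV : ∀ y, y ≠ 0 → ∑ b, pd b (fun z => w b z + pd b φ z) y =
      3 / 4 * ∑ b, pd b (w b) y := fun y hy => by
    simp only [pd_add (((hw _).contDiffAt_two hy).differentiableAt two_ne_zero)
      (((hdφ _).contDiffAt_two hy).differentiableAt two_ne_zero), Finset.sum_add_distrib]
    rw [show ∑ b, pd b (pd b φ) y = lap φ y from rfl, hlapφ y hy]
    ring
  change lap (fun y => w a y + pd a φ y) x +
    1 / 3 * pd a (fun y => ∑ b, pd b (fun z => w b z + pd b φ z) y) x = F a x
  rw [lap_add ((hw a).contDiffAt_two hx) ((hdφ a).contDiffAt_two hx), hlapw a x hx, hlap_pdφ,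
    (pd_congr (eventually_nhds_of_ne_zero hdivV hx) a).self_of_nhds,
    pd_const_mul _ ((hdiv.contDiffAt_two hx).differentiableAt two_ne_zero)]
  ring

theorem isLogHom_of_eq_sum_smul {k : ℤ} {n : ℕ} {P : Fin n → ℝ³ → ℝ³}
    (hsmooth : ∀ l, ContDiffOn ℝ ∞ (P l) {x | x ≠ 0})
    (hhom : ∀ l, ∀ t : ℝ, 0 < t → ∀ x, x ≠ 0 → P l (t • x) = P l x) (a : Fin 3) :
    IsLogHom k n fun x => (‖x‖ ^ k • ∑ l : Fin n, Real.log ‖x‖ ^ (l : ℕ) • P l x) a := by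
  have hP : ∀ l, IsSmoothHom k fun x => ‖x‖ ^ k * P l x a := fun l => by
    have hPa : IsSmoothHom 0 fun x => P l x a :=
      ⟨contDiffOn_euclidean.1 (hsmooth l) a, fun t ht x hx => by simp [hhom l t ht x hx]⟩
    simpa using (IsSmoothHom.norm_zpow k).mul hPa
  refine (IsLogHom.sum Finset.univ fun l _ => .log_pow_mul (hP l) l.2).congr fun x _ => ?_
  simp only [PiLp.smul_apply, smul_eq_mul, WithLp.ofLp_sum, Finset.sum_apply, Finset.mul_sum,
    mul_left_comm]

theorem exists_eq_sum_smul_of_isLogHom {k : ℤ} {n : ℕ} {V : ℝ³ → ℝ³}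
    (hV : ∀ a, IsLogHom k n fun x => V x a) :
    ∃ W : Fin n → ℝ³ → ℝ³, (∀ l, ContDiffOn ℝ ∞ (W l) {x | x ≠ 0}) ∧
      (∀ l, ∀ t : ℝ, 0 < t → ∀ x, x ≠ 0 → W l (t • x) = W l x) ∧
      ∀ x, x ≠ 0 → V x = ‖x‖ ^ k • ∑ l : Fin n, Real.log ‖x‖ ^ (l : ℕ) • W l x := by
  choose c hc hVc using hV
  have hc₀ : ∀ a l, IsSmoothHom 0 fun x => ‖x‖ ^ (-k) * c a l x := fun a l => by
    simpa using (IsSmoothHom.norm_zpow (-k)).mul (hc a l)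
  refine ⟨fun l x => WithLp.toLp 2 fun a => ‖x‖ ^ (-k) * c a l x,
    fun l => contDiffOn_euclidean.2 fun a => (hc₀ a l).contDiffOn, fun l t ht x hx => ?_,
    fun x hx => ?_⟩
  · ext a
    simpa using (hc₀ a l).map_smul t ht x hx
  · ext a
    have hxk : ‖x‖ ^ k ≠ 0 := zpow_ne_zero _ (norm_ne_zero_iff.2 hx)
    refine (hVc a x hx).trans ?_
    rw [Finset.sum_range]
    simp only [PiLp.smul_apply, smul_eq_mul, WithLp.ofLp_sum, Finset.sum_apply, Finset.mul_sum,
      zpow_neg]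
    exact Finset.sum_congr rfl fun l _ => by field_simp

/-- Smooth-data version of Lemma 3.6 (Meyers' potential for L_δ): given
smooth degree-0 homogeneous vector fields p̊_l, l = 0,…,ℓ, there exist smooth
degree-0 homogeneous vector fields V̊_l, l = 0,…,ℓ+2, such that
V(x) = ‖x‖^k Σ (log ‖x‖)^l V̊_l(x) satisfies
(L_δ V)^a = ‖x‖^{k−2} Σ (log ‖x‖)^l p̊_l^a(x) on ℝ³ ∖ {0}. -/
theorem stmt16 (k : ℤ) (ℓ : ℕ)
    (P : Fin (ℓ + 1) → EuclideanSpace ℝ (Fin 3) → EuclideanSpace ℝ (Fin 3))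
    (hPsmooth : ∀ l, ContDiffOn ℝ (⊤ : ℕ∞) (P l)
      {x : EuclideanSpace ℝ (Fin 3) | x ≠ 0})
    (hPhom : ∀ l, ∀ t : ℝ, 0 < t → ∀ x : EuclideanSpace ℝ (Fin 3), x ≠ 0 →
      P l (t • x) = P l x) :
    ∃ W : Fin (ℓ + 3) → EuclideanSpace ℝ (Fin 3) → EuclideanSpace ℝ (Fin 3),
      (∀ l, ContDiffOn ℝ (⊤ : ℕ∞) (W l)
        {x : EuclideanSpace ℝ (Fin 3) | x ≠ 0}) ∧
      (∀ l, ∀ t : ℝ, 0 < t → ∀ x : EuclideanSpace ℝ (Fin 3), x ≠ 0 →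
        W l (t • x) = W l x) ∧
      (∀ x : EuclideanSpace ℝ (Fin 3), x ≠ 0 → ∀ a : Fin 3,
        Ldelta (fun y => (‖y‖ ^ k) •
          ∑ l : Fin (ℓ + 3), (Real.log ‖y‖) ^ (l : ℕ) • W l y) a x =
        ‖x‖ ^ (k - 2) *
          ∑ l : Fin (ℓ + 1), (Real.log ‖x‖) ^ (l : ℕ) * P l x a) := by
  obtain ⟨V, hV, hLV⟩ := exists_Ldelta_eq
    (isLogHom_of_eq_sum_smul (k := k - 2) hPsmooth hPhom)
  obtain ⟨W, hWsmooth, hWhom, hVW⟩ := exists_eq_sum_smul_of_isLogHom hV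
  refine ⟨W, hWsmooth, hWhom, fun x hx a => ?_⟩
  rw [← Ldelta_congr (eventually_nhds_of_ne_zero hVW hx) a, hLV x hx a]
  simp
end
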